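/- Let Γ'' be a composite of closed Galois structures Γ : (𝒞, ℰ) → (𝒳, ℱ) and Γ' = (F, U, θ, ζ) : (𝒳, ℱ) → (𝒴, 𝒢), with 𝒞 pointed protomodular, (𝒞, ℰ) satisfying (E4), (E5), (M), I preserving pullbacks of type (1), and F protoadditive. Let f : A → B be a Γ-normal extension. Then [f]_{Γ'',1} = [Ker f]_{Γ'',0}, where [f]_{Γ'',1} is the kernel of the domain component of the unit of the reflection of Ext_ℰ(𝒞) onto NExt_{Γ''}(𝒞) at f, and [Ker f]_{Γ'',0} is the kernel of the unit of the composite reflection F ∘ I at Ker f. Consequently, the restriction of the radical [−]_{Γ'',1} to the category NExt_Γ(𝒞) of Γ-normal extensions is protoadditive, and hence the reflector F₁ of NExt_Γ(𝒞) onto NExt_{Γ''}(𝒞) is protoadditive. -/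

import Mathlib

open CategoryTheory Limits

universe v u

section Axioms
variable {𝒟 : Type u} [Category.{v} 𝒟]

/-- Axiom (E1): the class contains all isomorphisms. -/
def AxE1 (E : MorphismProperty 𝒟) : Prop := ∀ {X Y : 𝒟} (f : X ⟶ Y), IsIso f → E f

/-- Axiom (E2): pullbacks of morphisms of the class exist and belong to the class. -/
def AxE2 (E : MorphismProperty 𝒟) : Prop :=
  ∀ {X Y Z : 𝒟} (f : X ⟶ Z) (g : Y ⟶ Z), E g →
    ∃ (P : 𝒟) (p₁ : P ⟶ X) (p₂ : P ⟶ Y), IsPullback p₁ p₂ f g ∧ E p₁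

/-- Axiom (E3): the class is closed under composition. -/
def AxE3 (E : MorphismProperty 𝒟) : Prop :=
  ∀ {X Y Z : 𝒟} (f : X ⟶ Y) (g : Y ⟶ Z), E f → E g → E (f ≫ g)

/-- Axiom (E4): if `f ≫ g` is in the class then so is `g`. -/
def AxE4 (E : MorphismProperty 𝒟) : Prop :=
  ∀ {X Y Z : 𝒟} (f : X ⟶ Y) (g : Y ⟶ Z), E (f ≫ g) → E g

/-- Axiom (E5): in a morphism of short exact sequences over a fixed base `A₀`, if the
extension `a` and the induced morphism `k` on kernels lie in the class, then so does the
middle morphism `f`. -/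
def AxE5 [HasZeroMorphisms 𝒟] (E : MorphismProperty 𝒟) : Prop :=
  ∀ {K L A₁ B A₀ : 𝒟} (ka : K ⟶ A₁) (kb : L ⟶ B) (a : A₁ ⟶ A₀) (b : B ⟶ A₀)
    (f : A₁ ⟶ B) (k : K ⟶ L), f ≫ b = a → k ≫ kb = ka ≫ f →
    ∀ (ha : ka ≫ a = 0) (hb : kb ≫ b = 0),
    Nonempty (IsLimit (KernelFork.ofι ka ha)) →
    Nonempty (IsLimit (KernelFork.ofι kb hb)) →
    E a → E k → E f

/-- The split short five lemma in a pointed category. -/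
def SplitShortFive (𝒟 : Type u) [Category.{v} 𝒟] [HasZeroMorphisms 𝒟] : Prop :=
  ∀ {K A B K' A' B' : 𝒟} (k : K ⟶ A) (f : A ⟶ B) (s : B ⟶ A)
    (k' : K' ⟶ A') (f' : A' ⟶ B') (s' : B' ⟶ A')
    (u : K ⟶ K') (v : A ⟶ A') (w : B ⟶ B'),
    s ≫ f = 𝟙 B → s' ≫ f' = 𝟙 B' →
    ∀ (hk : k ≫ f = 0) (hk' : k' ≫ f' = 0),
    Nonempty (IsLimit (KernelFork.ofι k hk)) →
    Nonempty (IsLimit (KernelFork.ofι k' hk')) →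
    u ≫ k' = k ≫ v → v ≫ f' = f ≫ w →
    IsIso u → IsIso w → IsIso v

/-- Pullbacks along split epimorphisms exist. -/
def HasSplitEpiPullbacks (𝒟 : Type u) [Category.{v} 𝒟] : Prop :=
  ∀ {X Y Z : 𝒟} (g : X ⟶ Z) (s : Z ⟶ X), s ≫ g = 𝟙 Z → ∀ h : Y ⟶ Z,
    ∃ (P : 𝒟) (p₁ : P ⟶ X) (p₂ : P ⟶ Y), IsPullback p₁ p₂ g h

/-- A pointed category is protomodular when it has pullbacks along split epimorphisms
and the split short five lemma holds. -/
def ProtomodularCat (𝒟 : Type u) [Category.{v} 𝒟] [HasZeroMorphisms 𝒟] : Prop :=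
  HasSplitEpiPullbacks 𝒟 ∧ SplitShortFive 𝒟

/-- An object of the `E`-slice category `(𝒟 ↓_E B)`: a morphism of `E` with codomain `B`. -/
structure ESliceObj (E : MorphismProperty 𝒟) (B : 𝒟) where
  dom : 𝒟
  hom : dom ⟶ B
  mem : E hom

/-- Morphisms of the `E`-slice category. -/
@[ext] structure ESliceHom {E : MorphismProperty 𝒟} {B : 𝒟} (g h : ESliceObj E B) where
  top : g.dom ⟶ h.dom
  w : top ≫ h.hom = g.hom

instance {E : MorphismProperty 𝒟} {B : 𝒟} : Category (ESliceObj E B) where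
  Hom := ESliceHom
  id g := ⟨𝟙 g.dom, Category.id_comp _⟩
  comp φ ψ := ⟨φ.top ≫ ψ.top, by rw [Category.assoc, ψ.w, φ.w]⟩
  id_comp φ := ESliceHom.ext (Category.id_comp φ.top)
  comp_id φ := ESliceHom.ext (Category.comp_id φ.top)
  assoc φ ψ χ := ESliceHom.ext (Category.assoc φ.top ψ.top χ.top)

/-- A functor `(𝒟 ↓_E B) ⥤ (𝒟 ↓_E A)` realizing base change (pullback) along
`f : A ⟶ B`. -/
structure PullbackFunctorAlong (E : MorphismProperty 𝒟) {A B : 𝒟} (f : A ⟶ B) where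
  R : ESliceObj E B ⥤ ESliceObj E A
  top : ∀ g : ESliceObj E B, (R.obj g).dom ⟶ g.dom
  isPB : ∀ g : ESliceObj E B, IsPullback (top g) (R.obj g).hom g.hom f
  nat : ∀ {g h : ESliceObj E B} (φ : g ⟶ h), (R.map φ).top ≫ top h = top g ≫ φ.top

/-- Axiom (M): every morphism of the class is monadic, i.e. any base-change functor
`f* : (𝒟 ↓_E B) ⥤ (𝒟 ↓_E A)` along a morphism `f` of `E` is a monadic right adjoint. -/
def AxM (E : MorphismProperty 𝒟) : Prop :=
  ∀ {A B : 𝒟} (f : A ⟶ B), E f →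
    ∀ P : PullbackFunctorAlong E f, Nonempty (MonadicRightAdjoint P.R)

/-- An object of the category `Ext_E(𝒟)` of `E`-extensions: a morphism of class `E`. -/
structure ExtObj (E : MorphismProperty 𝒟) where
  dom : 𝒟
  cod : 𝒟
  hom : dom ⟶ cod
  mem : E hom

/-- Morphisms of `Ext_E(𝒟)`: commutative squares. -/
@[ext] structure ExtHom {E : MorphismProperty 𝒟} (a b : ExtObj E) where
  top : a.dom ⟶ b.dom
  bot : a.cod ⟶ b.cod
  w : top ≫ b.hom = a.hom ≫ bot

instance {E : MorphismProperty 𝒟} : Category (ExtObj E) where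
  Hom := ExtHom
  id a := ⟨𝟙 a.dom, 𝟙 a.cod, by simp⟩
  comp φ ψ := ⟨φ.top ≫ ψ.top, φ.bot ≫ ψ.bot, by
    rw [Category.assoc, ψ.w, ← Category.assoc, φ.w, Category.assoc]⟩
  id_comp φ := ExtHom.ext (Category.id_comp φ.top) (Category.id_comp φ.bot)
  comp_id φ := ExtHom.ext (Category.comp_id φ.top) (Category.comp_id φ.bot)
  assoc φ ψ χ := ExtHom.ext (Category.assoc φ.top ψ.top χ.top)
    (Category.assoc φ.bot ψ.bot χ.bot)

instance {E : MorphismProperty 𝒟} [HasZeroMorphisms 𝒟] :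
    HasZeroMorphisms (ExtObj E) where
  zero a b := ⟨⟨0, 0, by simp⟩⟩
  comp_zero φ c := ExtHom.ext (comp_zero) (comp_zero)
  zero_comp a {b c} φ := ExtHom.ext (zero_comp) (zero_comp)

@[simp] lemma ExtHom.comp_top {E : MorphismProperty 𝒟} {a b c : ExtObj E}
    (φ : a ⟶ b) (ψ : b ⟶ c) : (φ ≫ ψ).top = φ.top ≫ ψ.top := rfl

@[simp] lemma ExtHom.comp_bot {E : MorphismProperty 𝒟} {a b c : ExtObj E}
    (φ : a ⟶ b) (ψ : b ⟶ c) : (φ ≫ ψ).bot = φ.bot ≫ ψ.bot := rfl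

@[simp] lemma ExtHom.id_top {E : MorphismProperty 𝒟} (a : ExtObj E) :
    (𝟙 a : a ⟶ a).top = 𝟙 a.dom := rfl

@[simp] lemma ExtHom.id_bot {E : MorphismProperty 𝒟} (a : ExtObj E) :
    (𝟙 a : a ⟶ a).bot = 𝟙 a.cod := rfl

/-- A morphism of `Ext_E(𝒟)` is a double `E`-extension when its two components are in `E`
and the comparison morphism to (any) pullback is in `E`. -/
def IsDoubleExt {E : MorphismProperty 𝒟} {a b : ExtObj E} (φ : a ⟶ b) : Prop :=
  E φ.top ∧ E φ.bot ∧
  ∀ {P : 𝒟} (p₁ : P ⟶ a.cod) (p₂ : P ⟶ b.dom), IsPullback p₁ p₂ φ.bot b.hom →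
    ∀ (l : a.dom ⟶ P), l ≫ p₁ = a.hom → l ≫ p₂ = φ.top → E l

/-- The class of double `E`-extensions, as a morphism property of `Ext_E(𝒟)`. -/
def DoubleExtClass (E : MorphismProperty 𝒟) : MorphismProperty (ExtObj E) :=
  fun _ _ φ => IsDoubleExt φ


/-- A functor preserves pullbacks of type (1): pullbacks of a split epimorphism `g ∈ ℰ`
along a morphism `h ∈ ℰ`. -/
def PreservesType1 (E : MorphismProperty 𝒟) (T : 𝒟 ⥤ 𝒟) : Prop :=
  ∀ {A B D C : 𝒟} (k : A ⟶ B) (l : A ⟶ D) (g : B ⟶ C) (h : D ⟶ C) (s : C ⟶ B),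
    s ≫ g = 𝟙 C → E g → E h → IsPullback k l g h →
    IsPullback (T.map k) (T.map l) (T.map g) (T.map h)

/-- A functor between pointed categories is protoadditive when it preserves split short
exact sequences (equivalently: zero morphisms and kernels of split epimorphisms). -/
structure Protoadditive {𝒟' : Type*} [Category 𝒟'] [HasZeroMorphisms 𝒟]
    [HasZeroMorphisms 𝒟'] (T : 𝒟 ⥤ 𝒟') : Prop where
  map_zero : ∀ (X Y : 𝒟), T.map (0 : X ⟶ Y) = 0
  preserves : ∀ {K A B : 𝒟} (k : K ⟶ A) (f : A ⟶ B) (s : B ⟶ A),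
    s ≫ f = 𝟙 B → ∀ (hk : k ≫ f = 0),
    Nonempty (IsLimit (KernelFork.ofι k hk)) →
    Nonempty (IsLimit (KernelFork.ofι (T.map k)
      (show T.map k ≫ T.map f = 0 by rw [← T.map_comp, hk, map_zero])))

end Axioms

/-- A closed Galois structure `Γ = (𝒞, 𝒳, I, H, η, ε, ℰ, ℱ)`: the replete full reflective
subcategory `𝒳` of `𝒞` is given by the predicate `inX`, the reflector `I` (composed with
the inclusion `H`) with unit `η` and the reflection universal property; the classes of
extensions `ℰ` (in `𝒞`) and `ℱ` (in `𝒳`) satisfy (E1)–(E3), `I(ℰ) ⊆ ℱ`, `H(ℱ) ⊆ ℰ`,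
unit components lie in `ℰ`, and the counit is an isomorphism. -/
structure GaloisStructure (𝒞 : Type u) [Category.{v} 𝒞] where
  inX : 𝒞 → Prop
  inX_iso : ∀ {X Y : 𝒞}, (X ≅ Y) → inX X → inX Y
  I : 𝒞 ⥤ 𝒞
  η : 𝟭 𝒞 ⟶ I
  I_mem : ∀ C : 𝒞, inX (I.obj C)
  refl_univ : ∀ {C D : 𝒞}, inX D → ∀ f : C ⟶ D, ∃! g : I.obj C ⟶ D, η.app C ≫ g = f
  η_iso_of_mem : ∀ {C : 𝒞}, inX C → IsIso (η.app C)
  E : MorphismProperty 𝒞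
  F : MorphismProperty 𝒞
  F_sub_E : ∀ {X Y : 𝒞} (f : X ⟶ Y), F f → E f
  F_in_X : ∀ {X Y : 𝒞} (f : X ⟶ Y), F f → inX X ∧ inX Y
  E1 : AxE1 E
  E2 : AxE2 E
  E3 : AxE3 E
  F1 : ∀ {X Y : 𝒞} (f : X ⟶ Y), inX X → inX Y → IsIso f → F f
  F2 : ∀ {X Y Z : 𝒞} (f : X ⟶ Z) (g : Y ⟶ Z), inX X → F g →
    ∃ (P : 𝒞) (p₁ : P ⟶ X) (p₂ : P ⟶ Y), IsPullback p₁ p₂ f g ∧ F p₁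
  F3 : ∀ {X Y Z : 𝒞} (f : X ⟶ Y) (g : Y ⟶ Z), F f → F g → F (f ≫ g)
  I_map_mem : ∀ {X Y : 𝒞} (f : X ⟶ Y), E f → F (I.map f)
  η_mem : ∀ C : 𝒞, E (η.app C)

namespace GaloisStructure

variable {𝒞 : Type u} [Category.{v} 𝒞] (G : GaloisStructure 𝒞)

/-- An extension is `Γ`-trivial when the naturality square of the unit at it is a
pullback. -/
def Trivial {A B : 𝒞} (f : A ⟶ B) : Prop :=
  IsPullback (G.η.app A) f (G.I.map f) (G.η.app B)

/-- An extension is `Γ`-normal when it lies in `ℰ` and the first projection of its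
kernel pair is `Γ`-trivial (in the presence of axiom (M) every morphism of `ℰ` is
monadic, so this agrees with the usual definition of normal extension). -/
def Normal {A B : 𝒞} (f : A ⟶ B) : Prop :=
  G.E f ∧ ∀ {P : 𝒞} (p₁ p₂ : P ⟶ A), IsPullback p₁ p₂ f f → G.Trivial p₁

end GaloisStructure

/-- Protoadditivity of a functor restricted to the full subcategory determined by a
predicate: split short exact sequences whose objects satisfy the predicate are sent to
split short exact sequences. -/
structure ProtoadditiveOn {𝒞 : Type u} [Category.{v} 𝒞] [HasZeroMorphisms 𝒞]
    (P : 𝒞 → Prop) (T : 𝒞 ⥤ 𝒞) : Prop where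
  map_zero : ∀ (X Y : 𝒞), P X → P Y → T.map (0 : X ⟶ Y) = 0
  preserves : ∀ {K A B : 𝒞} (k : K ⟶ A) (f : A ⟶ B) (s : B ⟶ A),
    P K → P A → P B → s ≫ f = 𝟙 B → ∀ (hk : k ≫ f = 0),
    Nonempty (IsLimit (KernelFork.ofι k hk)) →
    ∃ h0 : T.map k ≫ T.map f = 0,
      Nonempty (IsLimit (KernelFork.ofι (T.map k) h0))

/-- The data of a second closed Galois structure `Γ' = (F, U, θ, ζ) : (𝒳, ℱ) → (𝒴, 𝒢)`
on the reflective subcategory `𝒳` of a Galois structure `Γ` on `𝒞`: the replete full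
reflective subcategory `𝒴 ⊆ 𝒳` is given by `inY`, the reflector `F` (written `Fr`, with
unit `θ`) reflects `𝒳` onto `𝒴`, and the class `𝒢` of extensions of `𝒴` interacts with
`ℱ` as required for a closed Galois structure.  Composing with `Γ` yields the composite
Galois structure `Γ'' : (𝒞, ℰ) → (𝒴, 𝒢)` with reflector `F ∘ I` and unit
`θ_{I(−)} ∘ η`. -/
structure SecondStructure {𝒞 : Type u} [Category.{v} 𝒞] (G : GaloisStructure 𝒞) where
  inY : 𝒞 → Prop
  inY_iso : ∀ {X Y : 𝒞}, (X ≅ Y) → inY X → inY Y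
  Y_sub_X : ∀ C : 𝒞, inY C → G.inX C
  Fr : 𝒞 ⥤ 𝒞
  θ : 𝟭 𝒞 ⟶ Fr
  Fr_mem : ∀ C : 𝒞, G.inX C → inY (Fr.obj C)
  refl_univ : ∀ {C D : 𝒞}, G.inX C → inY D → ∀ f : C ⟶ D,
    ∃! g : Fr.obj C ⟶ D, θ.app C ≫ g = f
  θ_iso_of_mem : ∀ {C : 𝒞}, inY C → IsIso (θ.app C)
  𝒢 : MorphismProperty 𝒞
  𝒢_sub_F : ∀ {X Y : 𝒞} (f : X ⟶ Y), 𝒢 f → G.F f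
  𝒢_in_Y : ∀ {X Y : 𝒞} (f : X ⟶ Y), 𝒢 f → inY X ∧ inY Y
  θ_mem : ∀ C : 𝒞, G.inX C → G.F (θ.app C)
  Fr_map_mem : ∀ {X Y : 𝒞} (f : X ⟶ Y), G.F f → 𝒢 (Fr.map f)
  G1 : ∀ {X Y : 𝒞} (f : X ⟶ Y), inY X → inY Y → IsIso f → 𝒢 f
  G3 : ∀ {X Y Z : 𝒞} (f : X ⟶ Y) (g : Y ⟶ Z), 𝒢 f → 𝒢 g → 𝒢 (f ≫ g)

namespace SecondStructure

variable {𝒞 : Type u} [Category.{v} 𝒞] {G : GaloisStructure 𝒞} (S : SecondStructure G)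

/-- The unit `θ_{I(−)} ∘ η` of the composite reflection `F ∘ I` of `𝒞` onto `𝒴`. -/
def unit (C : 𝒞) : C ⟶ S.Fr.obj (G.I.obj C) := G.η.app C ≫ S.θ.app (G.I.obj C)

/-- `Γ''`-triviality: the naturality square of the unit of the composite reflection is
a pullback. -/
def TrivialComp {A B : 𝒞} (f : A ⟶ B) : Prop :=
  IsPullback (S.unit A) f ((G.I ⋙ S.Fr).map f) (S.unit B)

/-- `Γ''`-normality: the extension lies in `ℰ` and the first projection of its kernel
pair is `Γ''`-trivial. -/
def NormalComp {A B : 𝒞} (f : A ⟶ B) : Prop :=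
  G.E f ∧ ∀ {P : 𝒞} (p₁ p₂ : P ⟶ A), IsPullback p₁ p₂ f f → S.TrivialComp p₁

end SecondStructure

/-- A normalization: a reflection of the category `Ext_ℰ(𝒞)` onto its full subcategory of
extensions satisfying the predicate `N` (e.g. the `Γ`-normal, or `Γ''`-normal,
extensions): a left adjoint `I₁` of the inclusion, given by its unit `η₁` (whose codomain
components are isomorphisms) and the universal property. -/
structure Normalization {𝒞 : Type u} [Category.{v} 𝒞] (E : MorphismProperty 𝒞)
    (N : MorphismProperty 𝒞) where
  I₁ : ExtObj E ⥤ ExtObj E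
  η₁ : 𝟭 (ExtObj E) ⟶ I₁
  mem : ∀ a : ExtObj E, N (I₁.obj a).hom
  refl_univ : ∀ (a b : ExtObj E), N b.hom → ∀ φ : a ⟶ b,
    ∃! ψ : I₁.obj a ⟶ b, η₁.app a ≫ ψ = φ
  η_iso_of_mem : ∀ a : ExtObj E, N a.hom → IsIso (η₁.app a)
  bot_iso : ∀ a : ExtObj E, IsIso (ExtHom.bot (η₁.app a))

/-- The radical `[−]_{Γ',1}` associated with a normalization: the kernel of the domain
component of the unit, with its functorial action. -/
noncomputable def rad1map {𝒞 : Type u} [Category.{v} 𝒞] [HasZeroMorphisms 𝒞]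
    [HasKernels 𝒞] {E N : MorphismProperty 𝒞} (ND : Normalization E N)
    {a b : ExtObj E} (φ : a ⟶ b) :
    kernel ((ND.η₁.app a).top) ⟶ kernel ((ND.η₁.app b).top) :=
  kernel.map _ _ φ.top (ND.I₁.map φ).top (by
    have h := congrArg ExtHom.top (ND.η₁.naturality φ)
    simpa using h.symm)

/-!
Let `f : A ⟶ B` be `Γ`-normal with kernel `K`, let `J = F ∘ I`, and let `π₁` be a projection of the
kernel pair `R` of `f`. As `π₁` is a `Γ`-trivial split epimorphism, protoadditivity of `F` shows
that the pullback `T ⟶ A` of `J π₁` along the unit at `A` has kernel `J K`; by (E5) the comparison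
`R ⟶ T` is in `ℰ`. Being a base change of `f` along itself, `π₁` carries a descent datum for `f`,
which passes to the quotient `T`, so by (M) `T ⟶ A` is the base change along `f` of an extension
`q : Q ⟶ B`, with kernel `J K` and a quotient map `A ⟶ Q` in `ℰ`. This `q` is `Γ''`-normal, and
since kernels of `Γ''`-normal extensions lie in `𝒴`, every morphism from `f` to such an extension
factors through it: `q` is the normalisation of `f`, and `A ⟶ Q` has kernel `[K]_{Γ'',0}`. So the
kernel of `F₁ f` is `J (Ker f)`, and protoadditivity of `F₁` reduces to that of `F` by the split
short five lemma, and that of the radical to a `3 × 3` argument.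
-/

section Kernels

variable {𝒞 : Type u} [Category.{v} 𝒞] [HasZeroMorphisms 𝒞]

/-- `k` is a kernel of `f`; a propositional form of `IsLimit (KernelFork.ofι k _)`. -/
def IsKernel {K A B : 𝒞} (k : K ⟶ A) (f : A ⟶ B) : Prop :=
  ∃ w : k ≫ f = 0, Nonempty (IsLimit (KernelFork.ofι k w))

namespace IsKernel

variable {K K' A A' B B' : 𝒞} {k : K ⟶ A} {f : A ⟶ B}

lemma of_mono [Mono k] (w : k ≫ f = 0)
    (h : ∀ {X : 𝒞} (x : X ⟶ A), x ≫ f = 0 → ∃ l, l ≫ k = x) : IsKernel k f :=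
  ⟨w, ⟨KernelFork.IsLimit.ofι' k w fun x hx => ⟨(h x hx).choose, (h x hx).choose_spec⟩⟩⟩

lemma kernel_ι (f : A ⟶ B) [HasKernel f] : IsKernel (kernel.ι f) f :=
  ⟨kernel.condition f, ⟨kernelIsKernel f⟩⟩

lemma comp_eq_zero (h : IsKernel k f) : k ≫ f = 0 := h.1

lemma mono (h : IsKernel k f) : Mono k :=
  ⟨fun _ _ hxy => Fork.IsLimit.hom_ext h.2.some hxy⟩

lemma exists_lift (h : IsKernel k f) {X : 𝒞} (x : X ⟶ A) (hx : x ≫ f = 0) :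
    ∃ l : X ⟶ K, l ≫ k = x :=
  ⟨_, (KernelFork.IsLimit.lift' h.2.some x hx).2⟩

lemma iso_comp (h : IsKernel k f) (e : K' ⟶ K) [IsIso e] : IsKernel (e ≫ k) f := by
  have := h.mono
  refine of_mono (by rw [Category.assoc, h.comp_eq_zero, comp_zero]) fun x hx => ?_
  obtain ⟨l, rfl⟩ := h.exists_lift x hx
  exact ⟨l ≫ inv e, by simp⟩

lemma comp_mono (h : IsKernel k f) (m : B ⟶ B') [Mono m] : IsKernel k (f ≫ m) :=
  ⟨_, ⟨isKernelCompMono h.2.some m rfl⟩⟩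

lemma isIso (h : IsKernel k f) {k' : K' ⟶ A} (h' : IsKernel k' f) {u : K ⟶ K'}
    (hu : u ≫ k' = k) : IsIso u := by
  have := h.mono
  have := h'.mono
  obtain ⟨v, hv⟩ := h.exists_lift k' h'.comp_eq_zero
  exact ⟨v, by rw [← cancel_mono k, Category.assoc, hv, hu, Category.id_comp],
    by rw [← cancel_mono k', Category.assoc, hu, hv, Category.id_comp]⟩

lemma of_isPullback {t : A ⟶ A'} {r : A' ⟶ B'} {b : B ⟶ B'} (h : IsKernel k f)
    (hp : IsPullback t f r b) : IsKernel (k ≫ t) r := by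
  have := h.mono
  have : Mono (k ≫ t) := by
    refine ⟨fun x y hxy => ?_⟩
    rw [← cancel_mono k]
    exact hp.hom_ext (by simpa using hxy) (by simp [h.comp_eq_zero])
  refine of_mono (by rw [Category.assoc, hp.w, reassoc_of% h.comp_eq_zero, zero_comp])
    fun x hx => ?_
  obtain ⟨l, hl⟩ := h.exists_lift (hp.lift x 0 (by rw [hx, zero_comp])) (hp.lift_snd ..)
  exact ⟨l, by rw [reassoc_of% hl, hp.lift_fst]⟩

lemma lift_of_isPullback {t : A' ⟶ A} {l : A' ⟶ B'} {b : B' ⟶ B} (h : IsKernel k f)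
    (hp : IsPullback t l f b) {k' : K ⟶ A'} (hk' : k' ≫ t = k) (hl : k' ≫ l = 0) :
    IsKernel k' l := by
  have := h.mono
  have : Mono k' := mono_of_mono_fac hk'
  refine of_mono hl fun x hx => ?_
  obtain ⟨m, hm⟩ := h.exists_lift (x ≫ t) (by
    rw [Category.assoc, hp.w, reassoc_of% hx, zero_comp])
  exact ⟨m, hp.hom_ext (by rw [Category.assoc, hk', hm])
    (by rw [Category.assoc, hl, hx, comp_zero])⟩

lemma isPullback {a : A ⟶ A'} {g : A' ⟶ B} {k' : K' ⟶ A'} {u : K ⟶ K'}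
    (h : IsKernel k (a ≫ g)) (h' : IsKernel k' g) (w : u ≫ k' = k ≫ a) :
    IsPullback k u a k' := by
  have := h.mono
  have := h'.mono
  choose l hl using fun c : PullbackCone a k' => h.exists_lift c.fst (by
    rw [reassoc_of% c.condition, h'.comp_eq_zero, comp_zero])
  refine ⟨⟨w.symm⟩, ⟨PullbackCone.IsLimit.mk _ l hl (fun c => ?_) fun c m hm _ => ?_⟩⟩
  · rw [← cancel_mono k', Category.assoc, w, reassoc_of% hl, c.condition]
  · rw [← cancel_mono k, hm, hl]

/-- Part of the `3 × 3` lemma: the columns are `ιc`, `ιa`, `ιb`. -/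
lemma of_grid {Kc Ka Kb C D C' : 𝒞} {κ : Kc ⟶ Ka} {π : Ka ⟶ Kb} {ιc : Kc ⟶ C} {ιa : Ka ⟶ A}
    {ιb : Kb ⟶ B} {k : C ⟶ A} {c : C ⟶ C'} {a : A ⟶ D} {k' : C' ⟶ D} [Mono ιa] [Mono ιb] [Mono k']
    (hk : IsKernel k f) (hc : IsKernel ιc c) (ha : ιa ≫ a = 0) (hκ : κ ≫ ιa = ιc ≫ k)
    (hπ : π ≫ ιb = ιa ≫ f) (hka : k ≫ a = c ≫ k') : IsKernel κ π := by
  have := hk.mono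
  have := hc.mono
  have : Mono (κ ≫ ιa) := by rw [hκ]; exact mono_comp ιc k
  have : Mono κ := mono_of_mono κ ιa
  refine of_mono ?_ fun x hx => ?_
  · rw [← cancel_mono ιb, Category.assoc, hπ, reassoc_of% hκ, hk.comp_eq_zero, comp_zero, zero_comp]
  · obtain ⟨y, hy⟩ := hk.exists_lift (x ≫ ιa) (by
      rw [Category.assoc, ← hπ, reassoc_of% hx, zero_comp])
    obtain ⟨l, rfl⟩ := hc.exists_lift y (by
      rw [← cancel_mono k', Category.assoc, ← hka, reassoc_of% hy, ha, comp_zero, zero_comp])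
    exact ⟨l, by rw [← cancel_mono ιa, Category.assoc, hκ, ← hy, Category.assoc]⟩

end IsKernel

end Kernels

namespace SplitShortFive

variable {𝒞 : Type u} [Category.{v} 𝒞] [HasZeroMorphisms 𝒞]

lemma isIso_of_fac (h5 : SplitShortFive 𝒞) {K K' A A' B : 𝒞} {k : K ⟶ A} {f : A ⟶ B} {s : B ⟶ A}
    {k' : K' ⟶ A'} {f' : A' ⟶ B} {s' : B ⟶ A'} {u : K ⟶ K'} [IsIso u] {v : A ⟶ A'}
    (hs : s ≫ f = 𝟙 B) (hs' : s' ≫ f' = 𝟙 B) (hk : IsKernel k f) (hk' : IsKernel k' f')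
    (hu : u ≫ k' = k ≫ v) (hv : v ≫ f' = f) : IsIso v :=
  h5 k f s k' f' s' u v (𝟙 B) hs hs' hk.1 hk'.1 hk.2 hk'.2 hu (by rw [hv, Category.comp_id])
    inferInstance inferInstance

variable [HasFiniteLimits 𝒞]

lemma isPullback (h5 : SplitShortFive 𝒞) {K A' A B' B : 𝒞} {t : A' ⟶ A} {l : A' ⟶ B'} {r : A ⟶ B}
    {b : B' ⟶ B} {s' : B' ⟶ A'} {s : B ⟶ A} {k : K ⟶ A'} (w : t ≫ r = l ≫ b)
    (hs' : s' ≫ l = 𝟙 B') (hs : s ≫ r = 𝟙 B) (hk : IsKernel k l) (hkt : IsKernel (k ≫ t) r) :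
    IsPullback t l r b := by
  have hp := IsPullback.of_hasPullback r b
  have hzero : (k ≫ t) ≫ r = 0 ≫ b := by rw [hkt.comp_eq_zero, zero_comp]
  have hk₀ : IsKernel (hp.lift (k ≫ t) 0 hzero) (pullback.snd r b) :=
    hkt.lift_of_isPullback hp (hp.lift_fst ..) (hp.lift_snd ..)
  have : IsIso (hp.lift t l w) := by
    refine h5.isIso_of_fac (u := 𝟙 K) (s' := hp.lift (b ≫ s) (𝟙 B') (by simp [hs])) hs'
      (hp.lift_snd ..) hk hk₀ ?_ (hp.lift_snd ..)
    exact hp.hom_ext (by simp) (by simp [hk.comp_eq_zero])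
  exact .of_iso_pullback ⟨w⟩ (asIso (hp.lift t l w)) (hp.lift_fst ..) (hp.lift_snd ..)

lemma hom_ext (h5 : SplitShortFive 𝒞) {K A B Z : 𝒞} {k : K ⟶ A} {f : A ⟶ B} {s : B ⟶ A}
    (hs : s ≫ f = 𝟙 B) (hk : IsKernel k f) {x y : A ⟶ Z} (hkxy : k ≫ x = k ≫ y)
    (hsxy : s ≫ x = s ≫ y) : x = y := by
  have := hk.mono
  have hlift : equalizer.lift k hkxy ≫ equalizer.ι x y = k := equalizer.lift_ι ..
  have hslift : equalizer.lift s hsxy ≫ equalizer.ι x y = s := equalizer.lift_ι ..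
  have : Mono (equalizer.lift k hkxy) := mono_of_mono_fac hlift
  have hker : IsKernel (equalizer.lift k hkxy) (equalizer.ι x y ≫ f) := by
    refine .of_mono (by rw [reassoc_of% hlift, hk.comp_eq_zero]) fun a ha => ?_
    obtain ⟨l, hl⟩ := hk.exists_lift (a ≫ equalizer.ι x y) (by rw [Category.assoc, ha])
    exact ⟨l, by rw [← cancel_mono (equalizer.ι x y), Category.assoc, hlift, hl]⟩
  have : IsIso (equalizer.ι x y) :=
    h5.isIso_of_fac (u := 𝟙 K) (by rw [reassoc_of% hslift, hs]) hs hker hk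
      (by rw [hlift, Category.id_comp]) rfl
  rw [← cancel_epi (equalizer.ι x y)]
  exact equalizer.condition x y

end SplitShortFive

namespace ESliceHom

variable {𝒞 : Type u} [Category.{v} 𝒞] {E : MorphismProperty 𝒞} {B : 𝒞} {a b c : ESliceObj E B}

lemma hom_ext {φ ψ : a ⟶ b} (h : φ.top = ψ.top) : φ = ψ := ESliceHom.ext h

@[simp] lemma id_top (a : ESliceObj E B) : (𝟙 a : a ⟶ a).top = 𝟙 a.dom := rfl

@[simp] lemma comp_top (φ : a ⟶ b) (ψ : b ⟶ c) : (φ ≫ ψ).top = φ.top ≫ ψ.top := rfl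

lemma isIso_iff (φ : a ⟶ b) : IsIso φ ↔ IsIso φ.top := by
  refine ⟨fun _ => ⟨(inv φ).top, ?_, ?_⟩, fun _ => ⟨⟨inv φ.top, ?_⟩, ?_, ?_⟩⟩
  · rw [← comp_top, IsIso.hom_inv_id, id_top]
  · rw [← comp_top, IsIso.inv_hom_id, id_top]
  · rw [IsIso.inv_comp_eq, φ.w]
  · exact hom_ext (IsIso.hom_inv_id φ.top)
  · exact hom_ext (IsIso.inv_hom_id φ.top)

end ESliceHom

lemma PullbackFunctorAlong.isIso_map {𝒞 : Type u} [Category.{v} 𝒞]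
    {E : MorphismProperty 𝒞} {A B P : 𝒞} {f : A ⟶ B} (F : PullbackFunctorAlong E f)
    {a b : ESliceObj E B} (φ : a ⟶ b) {x : P ⟶ a.dom} {l : P ⟶ A} (hx : IsPullback x l a.hom f)
    (hxφ : IsPullback (x ≫ φ.top) l b.hom f) : IsIso (F.R.map φ) := by
  have e : (F.R.map φ).top =
      ((F.isPB a).isoIsPullback _ _ hx ≪≫ hxφ.isoIsPullback _ _ (F.isPB b)).hom :=
    (F.isPB b).hom_ext (by simp [F.nat]) (by simp [ESliceHom.w])
  exact (ESliceHom.isIso_iff _).2 (e ▸ Iso.isIso_hom _)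

section Monadic

variable {𝒞 : Type u} [Category.{v} 𝒞] [HasFiniteLimits 𝒞]
  {E : MorphismProperty 𝒞} [E.IsStableUnderBaseChange]

/-- Base change `f* : (𝒞 ↓_E B) ⥤ (𝒞 ↓_E A)` along `f : A ⟶ B`, given by chosen pullbacks. -/
noncomputable def baseChange (E : MorphismProperty 𝒞) [E.IsStableUnderBaseChange] {A B : 𝒞}
    (f : A ⟶ B) : PullbackFunctorAlong E f where
  R :=
    { obj := fun g => ⟨pullback g.hom f, pullback.snd g.hom f, E.pullback_snd _ _ g.mem⟩
      map := fun {g h} φ => ⟨(IsPullback.of_hasPullback h.hom f).lift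
        (pullback.fst g.hom f ≫ φ.top) (pullback.snd g.hom f)
        (by rw [Category.assoc, φ.w, pullback.condition]), IsPullback.lift_snd ..⟩
      map_id := fun g => ESliceHom.hom_ext <|
        (IsPullback.of_hasPullback g.hom f).hom_ext (by simp) (by simp)
      map_comp := fun {_ _ k} φ ψ => ESliceHom.hom_ext <|
        (IsPullback.of_hasPullback k.hom f).hom_ext (by simp) (by simp) }
  top g := pullback.fst g.hom f
  isPB g := .of_hasPullback g.hom f
  nat _ := IsPullback.lift_fst ..

namespace AxM

lemma isIso_of_isPullback (hM : AxM E) {A B P X Y : 𝒞} {f : A ⟶ B} (hf : E f) {x : P ⟶ X}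
    {l : P ⟶ A} {g : X ⟶ B} {h : Y ⟶ B} (hg : E g) (hh : E h) {φ : X ⟶ Y} (w : φ ≫ h = g)
    (hx : IsPullback x l g f) (hxφ : IsPullback (x ≫ φ) l h f) : IsIso φ := by
  let R := (baseChange E f).R
  obtain ⟨_⟩ := hM f hf (baseChange E f)
  have : R.ReflectsIsomorphisms :=
    reflectsIsomorphisms_of_iso (Monad.comparisonForget (monadicAdjunction R))
  let ψ : (⟨X, g, hg⟩ : ESliceObj E B) ⟶ ⟨Y, h, hh⟩ := ⟨φ, w⟩
  have : IsIso (R.map ψ) := (baseChange E f).isIso_map ψ hx hxφ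
  exact (ESliceHom.isIso_iff ψ).1 (isIso_of_reflects_iso ψ R)

lemma isPullback_of_comp (hM : AxM E) {A B C P X Y : 𝒞} {f : A ⟶ B} (hf : E f) {x : P ⟶ X}
    {l : P ⟶ A} {g : X ⟶ B} {h : Y ⟶ C} (hg : E g) (hh : E h) {φ : X ⟶ Y} {c : B ⟶ C}
    (w : φ ≫ h = g ≫ c) (hx : IsPullback x l g f) (hxφ : IsPullback (x ≫ φ) l h (f ≫ c)) :
    IsPullback φ g h c := by
  have hc : IsPullback (pullback.fst h c) (pullback.snd h c) h c := .of_hasPullback h c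
  have hlift : hc.lift φ g w ≫ pullback.fst h c = φ := hc.lift_fst ..
  have : IsIso (hc.lift φ g w) := by
    refine hM.isIso_of_isPullback hf hg (E.pullback_snd h c hh) (hc.lift_snd ..) hx ?_
    refine .of_right (by rwa [Category.assoc, hlift]) ?_ hc
    rw [Category.assoc, hc.lift_snd, hx.w]
  exact .of_iso_pullback ⟨w⟩ (asIso (hc.lift φ g w)) hlift (hc.lift_snd ..)

variable [E.ContainsIdentities]

lemma epi (hM : AxM E) (h4 : AxE4 E) {A B : 𝒞} {f : A ⟶ B} (hf : E f) : Epi f := by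
  refine ⟨fun x y hxy => ?_⟩
  have hl : equalizer.lift f hxy ≫ equalizer.ι x y = f := equalizer.lift_ι ..
  have : IsIso (equalizer.ι x y) := by
    refine hM.isIso_of_isPullback hf (h4 _ _ (hl.symm ▸ hf)) (E.id_mem B) (Category.comp_id _)
      (x := equalizer.lift f hxy) (l := 𝟙 A) ?_ (hl.symm ▸ .of_vert_isIso ⟨by simp⟩)
    refine ⟨⟨by rw [hl, Category.id_comp]⟩, ⟨PullbackCone.IsLimit.mk _ (fun s => s.snd)
      (fun s => ?_) (fun s => Category.comp_id _) fun s m _ hm => by simpa using hm⟩⟩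
    rw [← cancel_mono (equalizer.ι x y), Category.assoc, hl, s.condition]
  rw [← cancel_epi (equalizer.ι x y)]
  exact equalizer.condition x y

end AxM

lemma AxE4.of_section {𝒞 : Type u} [Category.{v} 𝒞] {E : MorphismProperty 𝒞}
    [E.ContainsIdentities] (h4 : AxE4 E) {A B : 𝒞} {p : A ⟶ B} {s : B ⟶ A} (h : s ≫ p = 𝟙 B) :
    E p :=
  h4 s p (h ▸ E.id_mem B)

end Monadic

lemma exists_coequalizer_of_isSplitCoequalizer {𝒞 𝒟 : Type*} [Category.{v} 𝒞] [Category.{v} 𝒟]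
    (R : 𝒟 ⥤ 𝒞) [MonadicRightAdjoint R] {X Y : 𝒟} {f g : X ⟶ Y} {Z : 𝒞} {π : R.obj Y ⟶ Z}
    (h : IsSplitCoequalizer (R.map f) (R.map g) π) :
    ∃ (Q : 𝒟) (c : Y ⟶ Q) (w : f ≫ c = g ≫ c),
      Nonempty (IsColimit (Cofork.ofπ c w)) ∧ IsIso (h.rightSection ≫ R.map c) := by
  have : R.IsSplitPair f g := ⟨⟨Z, π, ⟨h⟩⟩⟩
  let _ := Monad.createsGSplitCoequalizersOfMonadic R f g
  have : HasColimit (parallelPair f g ⋙ R) :=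
    hasColimit_of_iso (F := parallelPair (R.map f) (R.map g)) (diagramIsoParallelPair _)
  have : HasCoequalizer f g := hasColimit_of_created _ R
  have hR := isColimitOfHasCoequalizerOfPreservesColimit R f g
  let i : Z ≅ R.obj (coequalizer f g) := h.isCoequalizer.coconePointUniqueUpToIso hR
  have hi : π ≫ i.hom = R.map (coequalizer.π f g) :=
    h.isCoequalizer.comp_coconePointUniqueUpToIso_hom hR WalkingParallelPair.one
  refine ⟨coequalizer f g, coequalizer.π f g, coequalizer.condition f g,
    ⟨coequalizerIsCoequalizer f g⟩, ?_⟩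
  rw [← hi, reassoc_of% h.rightSection_π]
  exact i.isIso_hom

section Descent

variable {𝒞 : Type u} [Category.{v} 𝒞] [HasFiniteLimits 𝒞] {A B R T : 𝒞}

/-- A descent datum on `t : T ⟶ A` relative to `f : A ⟶ B`: an algebra structure on `t` for the
monad `f* f_!` induced by base change along `f`. The two axioms are stated on generalised
elements. -/
structure DescentDatum (f : A ⟶ B) (t : T ⟶ A) where
  map : pullback (t ≫ f) f ⟶ T
  map_comp : map ≫ t = pullback.snd (t ≫ f) f
  unit : ∀ {X : 𝒞} (y : X ⟶ pullback (t ≫ f) f),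
    y ≫ pullback.fst _ _ ≫ t = y ≫ pullback.snd _ _ → y ≫ map = y ≫ pullback.fst _ _
  assoc : ∀ {X : 𝒞} (x y z : X ⟶ pullback (t ≫ f) f), y ≫ pullback.fst _ _ = x ≫ map →
    z ≫ pullback.fst _ _ = x ≫ pullback.fst _ _ → y ≫ pullback.snd _ _ = z ≫ pullback.snd _ _ →
    y ≫ map = z ≫ map

namespace DescentDatum

/-- The canonical descent datum on a base change `f* q`. -/
noncomputable def ofIsPullback {Q : 𝒞} {c : T ⟶ Q} {t : T ⟶ A} {q : Q ⟶ B} {f : A ⟶ B}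
    (h : IsPullback c t q f) : DescentDatum f t where
  map := h.lift (pullback.fst _ _ ≫ c) (pullback.snd _ _)
    (by rw [Category.assoc, h.w, pullback.condition])
  map_comp := h.lift_snd ..
  unit y hy := h.hom_ext (by simp) (by simp [hy])
  assoc x y z hxy hxz hyz := h.hom_ext (by simp [reassoc_of% hxy, reassoc_of% hxz]) (by simp [hyz])

lemma ofIsPullback_map_comp {Q : 𝒞} {c : T ⟶ Q} {t : T ⟶ A} {q : Q ⟶ B} {f : A ⟶ B}
    (h : IsPullback c t q f) : (ofIsPullback h).map ≫ c = pullback.fst (t ≫ f) f ≫ c :=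
  h.lift_fst ..

variable {f : A ⟶ B} {t : T ⟶ A} {r : R ⟶ A} {ρ : R ⟶ T}

/-- The map of free algebras `f* f_! r ⟶ f* f_! t` induced by `ρ : r ⟶ t`. -/
noncomputable def freeMap (f : A ⟶ B) (w : ρ ≫ t = r) : pullback (r ≫ f) f ⟶ pullback (t ≫ f) f :=
  (IsPullback.of_hasPullback (t ≫ f) f).lift (pullback.fst _ _ ≫ ρ) (pullback.snd _ _)
    (by rw [Category.assoc, reassoc_of% w, pullback.condition])

lemma freeMap_fst (w : ρ ≫ t = r) :
    freeMap f w ≫ pullback.fst _ _ = pullback.fst _ _ ≫ ρ :=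
  IsPullback.lift_fst ..

lemma freeMap_snd (w : ρ ≫ t = r) : freeMap f w ≫ pullback.snd _ _ = pullback.snd _ _ :=
  IsPullback.lift_snd ..

variable {E : MorphismProperty 𝒞} [E.IsStableUnderBaseChange]

lemma freeMap_mem (hρ : E ρ) (w : ρ ≫ t = r) : E (freeMap f w) := by
  have : IsPullback (pullback.fst (r ≫ f) f) (freeMap f w) ρ (pullback.fst (t ≫ f) f) := by
    refine .of_bot ?_ (freeMap_fst w).symm (.of_hasPullback (t ≫ f) f)
    rw [freeMap_snd, reassoc_of% w]
    exact .of_hasPullback (r ≫ f) f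
  exact E.of_isPullback this hρ

variable [E.IsMultiplicative]

/-- The total object of the descent datum, over `B`. -/
abbrev total (hf : E f) (ht : E t) : ESliceObj E B := ⟨T, t ≫ f, E.comp_mem _ _ ht hf⟩

/-- The free algebra on the total object, over `B`. -/
noncomputable abbrev free (hf : E f) (ht : E t) : ESliceObj E B :=
  ⟨pullback (t ≫ f) f, pullback.fst _ _ ≫ t ≫ f, E.comp_mem _ _
    (E.of_isPullback (.flip <| .of_hasPullback _ _) hf) (E.comp_mem _ _ ht hf)⟩

/-- The action of the descent datum, over `B`. -/
noncomputable def action (hf : E f) (ht : E t) (D : DescentDatum f t) :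
    free hf ht ⟶ total hf ht :=
  ⟨D.map, by simp only [free, total, reassoc_of% D.map_comp, pullback.condition]⟩

/-- The projection from the free algebra, over `B`. -/
noncomputable def projection (hf : E f) (ht : E t) : free hf ht ⟶ total hf ht :=
  ⟨pullback.fst _ _, rfl⟩

/-- The Beck coequalizer of the algebra `t`, which is split after base change along `f`. -/
noncomputable def splitCoequalizer (hf : E f) (ht : E t) (D : DescentDatum f t) :
    IsSplitCoequalizer ((baseChange E f).R.map (action hf ht D))
      ((baseChange E f).R.map (projection hf ht))
      (⟨D.map, D.map_comp⟩ : (baseChange E f).R.obj (total hf ht) ⟶ ⟨T, t, ht⟩) := by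
  have hT : IsPullback (pullback.fst (t ≫ f) f) _ _ _ := .of_hasPullback (t ≫ f) f
  have hP : IsPullback (pullback.fst (pullback.fst (t ≫ f) f ≫ t ≫ f) f) _ _ _ :=
    .of_hasPullback (pullback.fst (t ≫ f) f ≫ t ≫ f) f
  let s : T ⟶ pullback (t ≫ f) f := hT.lift (𝟙 T) t (Category.id_comp _)
  let s' : pullback (t ≫ f) f ⟶ pullback (pullback.fst (t ≫ f) f ≫ t ≫ f) f :=
    hP.lift (𝟙 _) (pullback.snd _ _) ((Category.id_comp _).trans hT.w)
  have bottom : s' ≫ hT.lift (pullback.fst _ _ ≫ pullback.fst _ _) (pullback.snd _ _)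
      ((Category.assoc ..).trans hP.w) = 𝟙 _ := hT.hom_ext (by simp [s']) (by simp [s'])
  have top : s' ≫ hT.lift (pullback.fst _ _ ≫ D.map) (pullback.snd _ _)
      (by rw [Category.assoc, reassoc_of% D.map_comp, ← hT.w, hP.w]) = D.map ≫ s :=
    hT.hom_ext (by simp [s, s']) (by simp [s, s', D.map_comp])
  exact
    { rightSection := ⟨s, hT.lift_snd ..⟩
      leftSection := ⟨s', hP.lift_snd ..⟩
      condition := ESliceHom.hom_ext <| D.assoc _ _ _ (IsPullback.lift_fst ..)
        (IsPullback.lift_fst ..) ((IsPullback.lift_snd ..).trans (IsPullback.lift_snd ..).symm)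
      rightSection_π := ESliceHom.hom_ext <| (D.unit s (by simp [s])).trans (hT.lift_fst ..)
      leftSection_bottom := ESliceHom.hom_ext bottom
      leftSection_top := ESliceHom.hom_ext top }

lemma exists_descent (hM : AxM E) (hf : E f) (ht : E t) (D : DescentDatum f t) :
    ∃ (Q : 𝒞) (q : Q ⟶ B) (c : T ⟶ Q), E q ∧ IsPullback c t q f ∧
      D.map ≫ c = pullback.fst _ _ ≫ c ∧
      ∀ {Z : 𝒞} (z : Z ⟶ B) (m : T ⟶ Z), E z → m ≫ z = t ≫ f →
        D.map ≫ m = pullback.fst _ _ ≫ m → ∃ n : Q ⟶ Z, c ≫ n = m ∧ n ≫ z = q := by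
  let F := baseChange E f
  obtain ⟨_⟩ := hM f hf F
  obtain ⟨Q, c, w, ⟨hQ⟩, _⟩ :=
    exists_coequalizer_of_isSplitCoequalizer F.R (splitCoequalizer hf ht D)
  let i : (⟨T, t, ht⟩ : ESliceObj E A) ≅ F.R.obj Q :=
    @asIso _ _ _ _ ((splitCoequalizer hf ht D).rightSection ≫ F.R.map c) ‹_›
  have : IsIso i.hom.top := (ESliceHom.isIso_iff i.hom).1 inferInstance
  have hic : i.hom.top ≫ F.top Q = c.top := by
    have hs : (splitCoequalizer hf ht D).rightSection.top ≫ F.top (total hf ht) = 𝟙 T :=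
      IsPullback.lift_fst ..
    exact (Category.assoc ..).trans (by rw [F.nat, reassoc_of% hs])
  refine ⟨Q.dom, Q.hom, c.top, Q.mem,
    .of_iso_pullback ⟨c.w⟩ (@asIso _ _ T _ i.hom.top this) hic i.hom.w,
    congrArg ESliceHom.top w, ?_⟩
  intro Z z m hz hm hDm
  obtain ⟨n, hn⟩ := Cofork.IsColimit.desc' hQ
    (⟨m, hm⟩ : total hf ht ⟶ ⟨Z, z, hz⟩) (ESliceHom.hom_ext hDm)
  exact ⟨n.top, congrArg ESliceHom.top hn, n.w⟩

end DescentDatum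

end Descent

section Quotients

variable {𝒞 : Type u} [Category.{v} 𝒞] [HasZeroMorphisms 𝒞] [HasFiniteLimits 𝒞]
  {E : MorphismProperty 𝒞} [E.IsStableUnderBaseChange]

lemma AxM.isIso_of_isKernel (hM : AxM E) (hs : SplitShortFive 𝒞) {K X Y C : 𝒞} {g : X ⟶ C}
    {h : Y ⟶ C} (hg : E g) (hh : E h) {φ : X ⟶ Y} (w : φ ≫ h = g) {k : K ⟶ X}
    (hk : IsKernel k g) (hkφ : IsKernel (k ≫ φ) h) : IsIso φ := by
  have hP : IsPullback (pullback.fst g g) (pullback.snd g g) g g := .of_hasPullback g g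
  have hκ : IsKernel (hP.lift k 0 (by rw [hk.comp_eq_zero, zero_comp])) (pullback.snd g g) :=
    hk.lift_of_isPullback hP (hP.lift_fst ..) (hP.lift_snd ..)
  have hQ : IsPullback (pullback.fst h g) (pullback.snd h g) h g := .of_hasPullback h g
  have hκ' : IsKernel (hQ.lift (k ≫ φ) 0 (by rw [hkφ.comp_eq_zero, zero_comp]))
      (pullback.snd h g) :=
    hkφ.lift_of_isPullback hQ (hQ.lift_fst ..) (hQ.lift_snd ..)
  let ψ := hQ.lift (pullback.fst g g ≫ φ) (pullback.snd g g) (by rw [Category.assoc, w, hP.w])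
  have : IsIso ψ :=
    hs.isIso_of_fac (u := 𝟙 K) (hP.lift_snd (𝟙 X) (𝟙 X) rfl)
      (hQ.lift_snd φ (𝟙 X) (by rw [w, Category.id_comp])) hκ hκ'
      (hQ.hom_ext (by simp [ψ]) (by simp [ψ])) (hQ.lift_snd ..)
  exact hM.isIso_of_isPullback hg hg hh w hP <|
    .of_iso_pullback ⟨by rw [Category.assoc, w, hP.w]⟩ (asIso ψ) (hQ.lift_fst ..) (hQ.lift_snd ..)

variable [E.IsMultiplicative]

namespace AxM

lemma exists_desc (hM : AxM E) (h4 : AxE4 E) {A B Z : 𝒞} {f : A ⟶ B} (hf : E f) {h : A ⟶ Z}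
    (w : ∀ {X : 𝒞} (x y : X ⟶ A), x ≫ f = y ≫ f → x ≫ h = y ≫ h) : ∃ n : B ⟶ Z, f ≫ n = h := by
  have hid : IsPullback f (𝟙 A) (𝟙 B) f := .of_vert_isIso ⟨by simp⟩
  let D := DescentDatum.ofIsPullback hid
  have hD : D.map = pullback.snd (𝟙 A ≫ f) f := (Category.comp_id _).symm.trans D.map_comp
  have hcond : pullback.snd (𝟙 A ≫ f) f ≫ f = pullback.fst (𝟙 A ≫ f) f ≫ f := by
    simp [← pullback.condition]
  obtain ⟨Q, q, c, hq, hc, -, hdesc⟩ := D.exists_descent hM hf (E.id_mem A)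
  have : IsIso q := by
    refine hM.isIso_of_isPullback hf hq (E.id_mem B) (Category.comp_id q) hc ?_
    rwa [hc.w, Category.id_comp]
  obtain ⟨n, hn, -⟩ := hdesc (prod.fst : B ⨯ Z ⟶ B) (prod.lift f h)
    (h4.of_section (prod.lift_fst (𝟙 B) 0))
    ((prod.lift_fst f h).trans (Category.id_comp f).symm) (by
      rw [hD, prod.comp_lift, prod.comp_lift, hcond, w _ _ hcond])
  refine ⟨inv q ≫ n ≫ prod.snd, ?_⟩
  have hfq : f = c ≫ q := by rw [hc.w, Category.id_comp]
  rw [hfq, Category.assoc, IsIso.hom_inv_id_assoc, reassoc_of% hn, prod.lift_snd]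

lemma exists_desc_of_isKernel (hM : AxM E) (h4 : AxE4 E) (hs : SplitShortFive 𝒞) {K A B Z : 𝒞}
    {k : K ⟶ A} {f : A ⟶ B} (hf : E f) (hk : IsKernel k f) {x : A ⟶ Z} (hx : k ≫ x = 0) :
    ∃ n : B ⟶ Z, f ≫ n = x := by
  have hR : IsPullback (pullback.fst f f) (pullback.snd f f) f f := .of_hasPullback f f
  have hκ : IsKernel (hR.lift 0 k (by rw [zero_comp, hk.comp_eq_zero])) (pullback.fst f f) :=
    hk.lift_of_isPullback hR.flip (hR.lift_snd ..) (hR.lift_fst ..)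
  have hfst : pullback.fst f f ≫ x = pullback.snd f f ≫ x :=
    hs.hom_ext (hR.lift_fst (𝟙 A) (𝟙 A) rfl) hκ (by simp [hx]) (by simp)
  refine hM.exists_desc h4 hf fun a b hab => ?_
  simpa using congrArg (hR.lift a b hab ≫ ·) hfst

end AxM

namespace DescentDatum

variable {A B R T : 𝒞} {f : A ⟶ B} {r : R ⟶ A} {t : T ⟶ A} {ρ : R ⟶ T}

lemma exists_freeMap_comp_eq (hM : AxM E) (h4 : AxE4 E) (hs : SplitShortFive 𝒞) (hρ : E ρ)
    (w : ρ ≫ t = r) (D : DescentDatum f r) : ∃ d, freeMap f w ≫ d = D.map ≫ ρ := by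
  refine hM.exists_desc_of_isKernel h4 hs (freeMap_mem hρ w) (.kernel_ι _) ?_
  have h₁ : kernel.ι (freeMap f w) ≫ pullback.fst (r ≫ f) f ≫ ρ = 0 := by
    rw [← freeMap_fst w, kernel.condition_assoc, zero_comp]
  have h₂ : kernel.ι (freeMap f w) ≫ pullback.snd (r ≫ f) f = 0 := by
    rw [← freeMap_snd w, kernel.condition_assoc, zero_comp]
  have hr : kernel.ι (freeMap f w) ≫ pullback.fst (r ≫ f) f ≫ r = 0 := by
    simpa [w] using h₁ =≫ t
  rw [← Category.assoc, D.unit _ (hr.trans h₂.symm), Category.assoc, h₁]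

/-- A descent datum passes to a quotient `ρ : r ⟶ t` with which its action is compatible. -/
noncomputable def ofQuotient (hM : AxM E) (h4 : AxE4 E) (hρ : E ρ) (w : ρ ≫ t = r)
    (D : DescentDatum f r) {d : pullback (t ≫ f) f ⟶ T} (hd : freeMap f w ≫ d = D.map ≫ ρ) :
    DescentDatum f t := by
  have cover {X : 𝒞} (y : X ⟶ pullback (t ≫ f) f) :
      ∃ (X' : 𝒞) (e : X' ⟶ X) (x : X' ⟶ pullback (r ≫ f) f), Epi e ∧ x ≫ freeMap f w = e ≫ y :=
    ⟨_, pullback.snd _ y, pullback.fst _ y,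
      hM.epi h4 (E.pullback_snd _ _ (freeMap_mem hρ w)), pullback.condition⟩
  refine ⟨d, ?_, fun y hy => ?_, fun x y z hxy hxz hyz => ?_⟩
  · have := hM.epi h4 (freeMap_mem (f := f) hρ w)
    rw [← cancel_epi (freeMap f w), reassoc_of% hd, w, D.map_comp, freeMap_snd]
  · obtain ⟨X', e, y', _, hy'⟩ := cover y
    have hy'₁ : y' ≫ pullback.fst _ _ ≫ ρ = e ≫ y ≫ pullback.fst _ _ := by
      rw [← freeMap_fst w, reassoc_of% hy']
    have hfix : y' ≫ D.map = y' ≫ pullback.fst _ _ := D.unit y' (by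
      have := hy'₁ =≫ t
      simp only [Category.assoc, w, hy] at this
      rw [this, ← freeMap_snd w, reassoc_of% hy'])
    rw [← cancel_epi e, ← reassoc_of% hy', hd, reassoc_of% hfix, hy'₁]
  · obtain ⟨X', e, x', _, hx'⟩ := cover x
    have hx'₁ : x' ≫ pullback.fst _ _ ≫ ρ = e ≫ z ≫ pullback.fst _ _ := by
      rw [← freeMap_fst w, reassoc_of% hx', hxz]
    have hx'₂ : x' ≫ D.map ≫ ρ = e ≫ y ≫ pullback.fst _ _ := by
      rw [← hd, reassoc_of% hx', hxy]
    have hr : IsPullback (pullback.fst (r ≫ f) f) _ _ _ := .of_hasPullback (r ≫ f) f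
    let y' := hr.lift (x' ≫ D.map) (e ≫ y ≫ pullback.snd _ _) (by
      simp only [Category.assoc, ← pullback.condition, ← reassoc_of% hx'₂, reassoc_of% w])
    let z' := hr.lift (x' ≫ pullback.fst _ _) (e ≫ z ≫ pullback.snd _ _) (by
      simp only [Category.assoc, ← pullback.condition, ← reassoc_of% hx'₁, reassoc_of% w])
    have hy' : y' ≫ freeMap f w = e ≫ y :=
      pullback.hom_ext (by simp [y', freeMap_fst, hx'₂]) (by simp [y', freeMap_snd])
    have hz' : z' ≫ freeMap f w = e ≫ z :=
      pullback.hom_ext (by simp [z', freeMap_fst, hx'₁]) (by simp [z', freeMap_snd])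
    have hyz' : y' ≫ D.map = z' ≫ D.map :=
      D.assoc x' y' z' (hr.lift_fst ..) (hr.lift_fst ..) (by simp [y', z', hyz])
    rw [← cancel_epi e, ← reassoc_of% hy', ← reassoc_of% hz', hd, reassoc_of% hyz']

lemma exists_descent_of_quotient (hM : AxM E) (h4 : AxE4 E) (hs : SplitShortFive 𝒞)
    {Q₀ : 𝒞} {c₀ : R ⟶ Q₀} {q₀ : Q₀ ⟶ B} (hf : E f) (hρ : E ρ) (ht : E t)
    (h : IsPullback c₀ r q₀ f) (w : ρ ≫ t = r) :
    ∃ (Q : 𝒞) (q : Q ⟶ B) (c : T ⟶ Q) (q' : Q₀ ⟶ Q),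
      E q ∧ E q' ∧ IsPullback c t q f ∧ c₀ ≫ q' = ρ ≫ c ∧ q' ≫ q = q₀ := by
  let D := ofIsPullback h
  have hDc : D.map ≫ c₀ = pullback.fst (r ≫ f) f ≫ c₀ := ofIsPullback_map_comp h
  obtain ⟨d, hd⟩ := D.exists_freeMap_comp_eq hM h4 hs hρ w
  let D' := ofQuotient hM h4 hρ w D hd
  obtain ⟨Q, q, c, hq, hc, hD'c, -⟩ := D'.exists_descent hM hf ht
  have hc₀ : E c₀ := E.of_isPullback h.flip hf
  have hDρc : D.map ≫ ρ ≫ c = pullback.fst (r ≫ f) f ≫ ρ ≫ c := by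
    have : freeMap f w ≫ d ≫ c = freeMap f w ≫ pullback.fst _ _ ≫ c := congrArg _ hD'c
    rwa [reassoc_of% hd, reassoc_of% freeMap_fst w] at this
  obtain ⟨q', hq'⟩ : ∃ q' : Q₀ ⟶ Q, c₀ ≫ q' = ρ ≫ c := by
    refine hM.exists_desc h4 hc₀ fun x y hxy => ?_
    have hr : IsPullback (pullback.fst (r ≫ f) f) _ _ _ := .of_hasPullback (r ≫ f) f
    let z := hr.lift x (y ≫ r) (by rw [← h.w, reassoc_of% hxy, h.w, Category.assoc])
    have hz : z ≫ D.map = y := h.hom_ext (by simp [z, hDc, hxy]) (by simp [z, D.map_comp])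
    rw [← hz, Category.assoc, hDρc, hr.lift_fst_assoc]
  have := hM.epi h4 hc₀
  refine ⟨Q, q, c, q', hq, h4 c₀ q' ?_, hc, hq', ?_⟩
  · rw [hq']
    exact E.comp_mem _ _ hρ (E.of_isPullback hc.flip hf)
  · rw [← cancel_epi c₀, reassoc_of% hq', hc.w, reassoc_of% w, h.w]

end DescentDatum

end Quotients

section Reflection

variable {𝒞 : Type u} [Category.{v} 𝒞]

/-- The family `η` exhibits `I` as a reflector of `𝒞` onto the replete full subcategory of the
objects satisfying `P`. -/
structure IsReflection (P : 𝒞 → Prop) (I : 𝒞 ⥤ 𝒞) (η : ∀ C, C ⟶ I.obj C) : Prop where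
  naturality : ∀ {A B : 𝒞} (f : A ⟶ B), η A ≫ I.map f = f ≫ η B
  of_iso : ∀ {X Y : 𝒞}, (X ≅ Y) → P X → P Y
  obj_mem : ∀ C : 𝒞, P (I.obj C)
  existsUnique : ∀ {C D : 𝒞}, P D → ∀ f : C ⟶ D, ∃! g : I.obj C ⟶ D, η C ≫ g = f

namespace IsReflection

variable {P : 𝒞 → Prop} {I : 𝒞 ⥤ 𝒞} {η : ∀ C, C ⟶ I.obj C}

lemma exists_lift (h : IsReflection P I η) {C D : 𝒞} (hD : P D) (f : C ⟶ D) :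
    ∃ g : I.obj C ⟶ D, η C ≫ g = f :=
  (h.existsUnique hD f).exists

lemma hom_ext (h : IsReflection P I η) {C D : 𝒞} (hD : P D) {x y : I.obj C ⟶ D}
    (hxy : η C ≫ x = η C ≫ y) : x = y :=
  (h.existsUnique hD (η C ≫ y)).unique hxy rfl

lemma mem_of_retraction (h : IsReflection P I η) {C : 𝒞} {r : I.obj C ⟶ C} (hr : η C ≫ r = 𝟙 C) :
    P C :=
  h.of_iso ⟨r, η C, h.hom_ext (h.obj_mem C) (by
    rw [reassoc_of% hr, Category.comp_id]), hr⟩ (h.obj_mem C)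

lemma mem_of_isKernel [HasZeroMorphisms 𝒞] (h : IsReflection P I η) {K A B : 𝒞}
    {k : K ⟶ A} {f : A ⟶ B} (hk : IsKernel k f) (hA : P A) (hB : P B) : P K := by
  have := hk.mono
  obtain ⟨k', hk'⟩ := h.exists_lift hA k
  obtain ⟨r, hr⟩ := hk.exists_lift k' (h.hom_ext hB (by
    rw [reassoc_of% hk', hk.comp_eq_zero, comp_zero]))
  exact h.mem_of_retraction (r := r) (by rw [← cancel_mono k, Category.assoc, hr, hk',
    Category.id_comp])

lemma mem_of_isKernel_of_normal [HasZeroMorphisms 𝒞] [HasFiniteLimits 𝒞] (h : IsReflection P I η)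
    {K A B : 𝒞} {k : K ⟶ A} {g : A ⟶ B} (hk : IsKernel k g)
    (hg : ∀ {R : 𝒞} (p₁ p₂ : R ⟶ A), IsPullback p₁ p₂ g g →
      IsPullback (η R) p₁ (I.map p₁) (η A)) : P K := by
  have hR : IsPullback (pullback.fst g g) (pullback.snd g g) g g := .of_hasPullback g g
  have hκ : IsKernel (hR.lift 0 k (by rw [zero_comp, hk.comp_eq_zero])) (pullback.fst g g) :=
    hk.lift_of_isPullback hR.flip (hR.lift_snd ..) (hR.lift_fst ..)
  exact h.mem_of_isKernel (hκ.of_isPullback (hg _ _ hR)) (h.obj_mem _) (h.obj_mem _)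

lemma comp_map_of_epi (h : IsReflection P I η) {R T : 𝒞} {ρ : R ⟶ T} [Epi ρ] {w : T ⟶ I.obj R}
    (hw : ρ ≫ w = η R) : w ≫ I.map ρ = η T := by
  rw [← cancel_epi ρ, reassoc_of% hw, h.naturality]

lemma isIso_map_of_epi (h : IsReflection P I η) {R T : 𝒞} {ρ : R ⟶ T} [Epi ρ] {w : T ⟶ I.obj R}
    (hw : ρ ≫ w = η R) : IsIso (I.map ρ) := by
  obtain ⟨w', hw'⟩ := h.exists_lift (h.obj_mem R) w
  refine ⟨w', h.hom_ext (h.obj_mem R) ?_, h.hom_ext (h.obj_mem T) ?_⟩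
  · rw [reassoc_of% h.naturality ρ, hw', hw, Category.comp_id]
  · rw [reassoc_of% hw', h.comp_map_of_epi hw, Category.comp_id]

end IsReflection

end Reflection

section Galois

variable {𝒞 : Type u} [Category.{v} 𝒞]

namespace GaloisStructure

variable (G : GaloisStructure 𝒞)

instance : G.E.IsStableUnderBaseChange where
  of_isPullback {X Y Y' Z f g f' g'} h hg := by
    obtain ⟨Q, q₁, q₂, hq, hE⟩ := G.E2 f g hg
    have : g' = (h.flip.isoIsPullback _ _ hq).hom ≫ q₁ := by simp
    rw [this]
    exact G.E3 _ _ (G.E1 _ inferInstance) hE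

instance : G.E.IsMultiplicative where
  id_mem _ := G.E1 _ inferInstance
  comp_mem f g := G.E3 f g

lemma isReflection : IsReflection G.inX G.I G.η.app where
  naturality f := (G.η.naturality f).symm
  of_iso := G.inX_iso
  obj_mem := G.I_mem
  existsUnique := G.refl_univ

lemma trivial_of_inX {A B : 𝒞} (hA : G.inX A) (hB : G.inX B) (f : A ⟶ B) : G.Trivial f :=
  have := G.η_iso_of_mem hA
  have := G.η_iso_of_mem hB
  .of_horiz_isIso ⟨G.isReflection.naturality f⟩

lemma inX_of_isKernel_of_normal [HasZeroMorphisms 𝒞] [HasFiniteLimits 𝒞] {K A B : 𝒞} {k : K ⟶ A}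
    {g : A ⟶ B} (hg : G.Normal g) (hk : IsKernel k g) : G.inX K :=
  G.isReflection.mem_of_isKernel_of_normal hk hg.2

end GaloisStructure

namespace SecondStructure

variable {G : GaloisStructure 𝒞} (S : SecondStructure G)

/-- The composite reflector `F ∘ I` of `𝒞` onto `𝒴`. -/
abbrev reflector : 𝒞 ⥤ 𝒞 := G.I ⋙ S.Fr

lemma unit_naturality {A B : 𝒞} (f : A ⟶ B) :
    S.unit A ≫ S.reflector.map f = f ≫ S.unit B := by
  have hη : G.η.app A ≫ G.I.map f = f ≫ G.η.app B := (G.η.naturality f).symm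
  have hθ : S.θ.app (G.I.obj A) ≫ S.Fr.map (G.I.map f) = G.I.map f ≫ S.θ.app (G.I.obj B) :=
    (S.θ.naturality (G.I.map f)).symm
  simp only [unit, Functor.comp_map, Category.assoc, hθ, reassoc_of% hη]

lemma isReflection : IsReflection S.inY S.reflector S.unit where
  naturality := S.unit_naturality
  of_iso := S.inY_iso
  obj_mem C := S.Fr_mem _ (G.I_mem C)
  existsUnique {C D} hD f := by
    obtain ⟨g, hg, hg'⟩ := G.refl_univ (S.Y_sub_X D hD) f
    obtain ⟨k, hk, hk'⟩ := S.refl_univ (G.I_mem C) hD g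
    refine ⟨k, (Category.assoc ..).trans (by rw [hk, hg]), fun k₀ hk₀ => hk' k₀ (hg' _ ?_)⟩
    rw [← hk₀, unit, Category.assoc]

lemma unit_mem (A : 𝒞) : G.E (S.unit A) :=
  G.E3 _ _ (G.η_mem A) (G.F_sub_E _ (S.θ_mem _ (G.I_mem A)))

lemma reflector_map_mem {A B : 𝒞} {f : A ⟶ B} (hf : G.E f) : G.E (S.reflector.map f) :=
  G.F_sub_E _ (S.𝒢_sub_F _ (S.Fr_map_mem _ (G.I_map_mem f hf)))

variable [HasZeroMorphisms 𝒞]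

lemma isKernel_Fr_map (hproto : ProtoadditiveOn G.inX S.Fr) {K A B : 𝒞} {k : K ⟶ A} {f : A ⟶ B}
    {s : B ⟶ A} (hs : s ≫ f = 𝟙 B) (hk : IsKernel k f) (hA : G.inX A) (hB : G.inX B) :
    IsKernel (S.Fr.map k) (S.Fr.map f) :=
  hproto.preserves k f s (G.isReflection.mem_of_isKernel hk hA hB) hA hB hs hk.1 hk.2

lemma isKernel_reflector_map (hproto : ProtoadditiveOn G.inX S.Fr) {K A B : 𝒞} {k : K ⟶ A}
    {p : A ⟶ B} {s : B ⟶ A} (hs : s ≫ p = 𝟙 B) (hk : IsKernel k p) (hp : G.Trivial p) :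
    IsKernel (S.reflector.map k) (S.reflector.map p) := by
  have hkη : IsKernel (k ≫ G.η.app A) (G.I.map p) := hk.of_isPullback hp
  have : IsIso (G.η.app K) :=
    G.η_iso_of_mem (G.isReflection.mem_of_isKernel hkη (G.I_mem A) (G.I_mem B))
  have hkI : IsKernel (G.I.map k) (G.I.map p) := by
    have : G.I.map k = inv (G.η.app K) ≫ k ≫ G.η.app A := by
      rw [← G.isReflection.naturality k, IsIso.inv_hom_id_assoc]
    rw [this]
    exact hkη.iso_comp _
  exact S.isKernel_Fr_map hproto (s := G.I.map s) (by rw [← G.I.map_comp, hs, G.I.map_id]) hkI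
    (G.I_mem A) (G.I_mem B)

lemma mem_of_isKernel_of_normalComp [HasFiniteLimits 𝒞] {K A B : 𝒞} {k : K ⟶ A} {g : A ⟶ B}
    (hg : S.NormalComp g) (hk : IsKernel k g) : S.inY K :=
  S.isReflection.mem_of_isKernel_of_normal hk hg.2

variable [HasFiniteLimits 𝒞]

lemma reflector_isPullback (hs : SplitShortFive 𝒞) (h4 : AxE4 G.E)
    (htype1 : PreservesType1 G.E G.I) (hproto : ProtoadditiveOn G.inX S.Fr) {A B C D : 𝒞}
    {k : A ⟶ B} {l : A ⟶ D} {g : B ⟶ C} {h : D ⟶ C} {s : C ⟶ B} (hsg : s ≫ g = 𝟙 C)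
    (hh : G.E h) (hp : IsPullback k l g h) :
    IsPullback (S.reflector.map k) (S.reflector.map l) (S.reflector.map g)
      (S.reflector.map h) := by
  have hI := htype1 k l g h s hsg (h4.of_section hsg) hh hp
  have hsl : hp.lift (h ≫ s) (𝟙 D) (by simp [hsg]) ≫ l = 𝟙 D := hp.lift_snd ..
  have hker := IsKernel.kernel_ι (G.I.map l)
  have hsI : G.I.map s ≫ G.I.map g = 𝟙 _ := by rw [← G.I.map_comp, hsg, G.I.map_id]
  have hslI : G.I.map (hp.lift (h ≫ s) (𝟙 D) (by simp [hsg])) ≫ G.I.map l = 𝟙 _ := by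
    rw [← G.I.map_comp, hsl, G.I.map_id]
  have hFker := S.isKernel_Fr_map hproto hsI (hker.of_isPullback hI) (G.I_mem B) (G.I_mem C)
  rw [S.Fr.map_comp] at hFker
  refine hs.isPullback (by rw [← S.reflector.map_comp, ← S.reflector.map_comp, hp.w])
    (s' := S.reflector.map (hp.lift (h ≫ s) (𝟙 D) (by simp [hsg]))) (s := S.reflector.map s)
    (by rw [← S.reflector.map_comp, hsl, S.reflector.map_id])
    (by rw [← S.reflector.map_comp, hsg, S.reflector.map_id])
    (S.isKernel_Fr_map hproto hslI hker (G.I_mem A) (G.I_mem D)) hFker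

lemma TrivialComp.of_isPullback {S : SecondStructure G} (hs : SplitShortFive 𝒞) (h4 : AxE4 G.E)
    (hM : AxM G.E) (htype1 : PreservesType1 G.E G.I) (hproto : ProtoadditiveOn G.inX S.Fr)
    {X' X D C : 𝒞} {x : X' ⟶ X} {l : X' ⟶ D} {p : X ⟶ C} {h : D ⟶ C} {s : C ⟶ X}
    (hl : S.TrivialComp l) (hsp : s ≫ p = 𝟙 C) (hh : G.E h) (hp : IsPullback x l p h) :
    S.TrivialComp p := by
  have hpE : G.E p := h4.of_section hsp
  refine hM.isPullback_of_comp hh hpE (S.reflector_map_mem hpE) (S.unit_naturality p) hp ?_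
  rw [← S.unit_naturality, ← S.unit_naturality]
  exact hl.paste_horiz (S.reflector_isPullback hs h4 htype1 hproto hsp hh hp)

lemma NormalComp.of_isPullback {S : SecondStructure G} (hs : SplitShortFive 𝒞) (h4 : AxE4 G.E)
    (hM : AxM G.E) (htype1 : PreservesType1 G.E G.I) (hproto : ProtoadditiveOn G.inX S.Fr)
    {A B Q T : 𝒞} {q : Q ⟶ B} {q' : A ⟶ Q} {c : T ⟶ Q} {t : T ⟶ A} (ht : S.TrivialComp t)
    (hq : G.E q) (hq' : G.E q') (hc : IsPullback c t q (q' ≫ q)) : S.NormalComp q := by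
  refine ⟨hq, fun p₁ p₂ hP => ?_⟩
  have hw : (t ≫ q') ≫ q = c ≫ q := by rw [Category.assoc, hc.w]
  have hx : IsPullback (hP.lift (t ≫ q') c hw) t p₁ q' :=
    .of_right (by rwa [hP.lift_snd]) (hP.lift_fst ..) hP.flip
  exact ht.of_isPullback hs h4 hM htype1 hproto (hP.lift_fst (𝟙 Q) (𝟙 Q) rfl) hq' hx

lemma exists_trivialComp_quotient (h4 : AxE4 G.E) (h5 : AxE5 G.E) (hM : AxM G.E)
    (hproto : ProtoadditiveOn G.inX S.Fr) {K R A : 𝒞} {κ : K ⟶ R} {p : R ⟶ A} {s : A ⟶ R}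
    (hs : s ≫ p = 𝟙 A) (hκ : IsKernel κ p) (hp : G.Trivial p) :
    ∃ (T : 𝒞) (t : T ⟶ A) (ρ : R ⟶ T) (k : S.reflector.obj K ⟶ T), S.TrivialComp t ∧ G.E t ∧
      G.E ρ ∧ ρ ≫ t = p ∧ IsKernel k t ∧ S.unit K ≫ k = κ ≫ ρ := by
  have hpE : G.E p := h4.of_section hs
  have hJκ := S.isKernel_reflector_map hproto hs hκ hp
  have hT := IsPullback.of_hasPullback (S.reflector.map p) (S.unit A)
  let ρ := hT.lift (S.unit R) p (S.unit_naturality p)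
  have hρ : ρ ≫ pullback.fst _ _ = S.unit R := hT.lift_fst ..
  have hρt : ρ ≫ pullback.snd _ _ = p := hT.lift_snd ..
  let k := hT.lift (S.reflector.map κ) 0 (by rw [hJκ.comp_eq_zero, zero_comp])
  have hk : IsKernel k (pullback.snd _ _) :=
    hJκ.lift_of_isPullback hT (hT.lift_fst ..) (hT.lift_snd ..)
  have hkρ : S.unit K ≫ k = κ ≫ ρ := hT.hom_ext
    (by rw [Category.assoc, hT.lift_fst, Category.assoc, hρ, S.unit_naturality])
    (by rw [Category.assoc, hT.lift_snd, Category.assoc, hρt, hκ.comp_eq_zero, comp_zero])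
  have hρE : G.E ρ := h5 κ k p _ ρ (S.unit K) hρt hkρ hκ.1 hk.1 hκ.2 hk.2 hpE (S.unit_mem K)
  have : Epi ρ := hM.epi h4 hρE
  have := S.isReflection.isIso_map_of_epi hρ
  refine ⟨_, _, ρ, k, ?_, G.E.pullback_snd _ _ (S.reflector_map_mem hpE), hρE, hρt, hk, hkρ⟩
  refine .of_iso hT (.refl _) (asIso (S.reflector.map ρ)) (.refl _) (.refl _) ?_ (by simp) ?_
    (by simp)
  · simpa using S.isReflection.comp_map_of_epi hρ
  · simp only [asIso_hom, Iso.refl_hom, Category.comp_id]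
    rw [← S.reflector.map_comp, hρt]

lemma exists_normalComp_quotient (hs : SplitShortFive 𝒞) (h4 : AxE4 G.E) (h5 : AxE5 G.E)
    (hM : AxM G.E) (htype1 : PreservesType1 G.E G.I) (hproto : ProtoadditiveOn G.inX S.Fr)
    {K A B : 𝒞} {ι : K ⟶ A} {f : A ⟶ B} (hf : G.Normal f) (hι : IsKernel ι f) :
    ∃ (Q : 𝒞) (q : Q ⟶ B) (q' : A ⟶ Q) (j : S.reflector.obj K ⟶ Q), S.NormalComp q ∧ G.E q' ∧
      q' ≫ q = f ∧ IsKernel j q ∧ S.unit K ≫ j = ι ≫ q' := by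
  have hR : IsPullback (pullback.fst f f) (pullback.snd f f) f f := .of_hasPullback f f
  let κ := hR.lift 0 ι (by rw [zero_comp, hι.comp_eq_zero])
  have hκ : IsKernel κ (pullback.fst f f) :=
    hι.lift_of_isPullback hR.flip (hR.lift_snd ..) (hR.lift_fst ..)
  obtain ⟨T, t, ρ, k, htriv, ht, hρ, hρt, hk, hkρ⟩ := S.exists_trivialComp_quotient h4 h5 hM
    hproto (hR.lift_fst (𝟙 A) (𝟙 A) rfl) hκ (hf.2 _ _ hR)
  obtain ⟨Q, q, c, q', hq, hq', hc, hcq', rfl⟩ :=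
    DescentDatum.exists_descent_of_quotient hM h4 hs hf.1 hρ ht hR.flip hρt
  refine ⟨Q, q, q', k ≫ c, NormalComp.of_isPullback hs h4 hM htype1 hproto htriv hq hq' hc, hq',
    rfl, hk.of_isPullback hc, ?_⟩
  rw [reassoc_of% hkρ, ← hcq', hR.lift_snd_assoc]

lemma exists_desc_of_normalComp (h4 : AxE4 G.E) (hM : AxM G.E) (hs : SplitShortFive 𝒞)
    {K A B Q C D : 𝒞} {ι : K ⟶ A} {q : Q ⟶ B} {q' : A ⟶ Q} {j : S.reflector.obj K ⟶ Q}
    (hq' : G.E q') (hι : IsKernel ι (q' ≫ q)) (hj : Mono j) (hιj : S.unit K ≫ j = ι ≫ q')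
    {g : C ⟶ D} (hg : S.NormalComp g) {x : A ⟶ C} {y : B ⟶ D} (hxy : x ≫ g = (q' ≫ q) ≫ y) :
    ∃ m : Q ⟶ C, q' ≫ m = x := by
  have hgker := IsKernel.kernel_ι g
  refine hM.exists_desc_of_isKernel h4 hs hq' (.kernel_ι q') ?_
  obtain ⟨l, hl⟩ := hι.exists_lift (kernel.ι q') (kernel.condition_assoc ..|>.trans zero_comp)
  obtain ⟨u, hu⟩ := hgker.exists_lift (ι ≫ x) (by
    rw [Category.assoc, hxy, ← Category.assoc, hι.comp_eq_zero, zero_comp])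
  obtain ⟨u', hu'⟩ := S.isReflection.exists_lift (S.mem_of_isKernel_of_normalComp hg hgker) u
  have hlK : l ≫ S.unit K = 0 := by
    rw [← cancel_mono j, Category.assoc, hιj, reassoc_of% hl, kernel.condition, zero_comp]
  rw [← hl, Category.assoc, ← hu, ← hu', Category.assoc, reassoc_of% hlK, zero_comp]

end SecondStructure

end Galois

section Extensions

variable {𝒞 : Type u} [Category.{v} 𝒞]

namespace ExtHom

variable {E : MorphismProperty 𝒞} {a b c : ExtObj E}

lemma epi (φ : a ⟶ b) [Epi φ.top] [Epi φ.bot] : Epi φ where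
  left_cancellation _ _ h :=
    ExtHom.ext ((cancel_epi φ.top).1 (congrArg ExtHom.top h))
      ((cancel_epi φ.bot).1 (congrArg ExtHom.bot h))

lemma isIso_top (φ : a ⟶ b) [IsIso φ] : IsIso φ.top :=
  ⟨(inv φ).top, congrArg ExtHom.top (IsIso.hom_inv_id φ), congrArg ExtHom.top (IsIso.inv_hom_id φ)⟩

lemma isIso_bot (φ : a ⟶ b) [IsIso φ] : IsIso φ.bot :=
  ⟨(inv φ).bot, congrArg ExtHom.bot (IsIso.hom_inv_id φ), congrArg ExtHom.bot (IsIso.inv_hom_id φ)⟩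

variable [HasZeroMorphisms 𝒞]

lemma isKernel_of_top_bot {k : c ⟶ a} {p : a ⟶ b} (ht : IsKernel k.top p.top)
    (hb : IsKernel k.bot p.bot) : IsKernel k p := by
  have := ht.mono
  have := hb.mono
  have : Mono k := ⟨fun x y hxy => ExtHom.ext ((cancel_mono k.top).1 (congrArg ExtHom.top hxy))
    ((cancel_mono k.bot).1 (congrArg ExtHom.bot hxy))⟩
  refine .of_mono (ExtHom.ext ht.comp_eq_zero hb.comp_eq_zero) fun x hx => ?_
  obtain ⟨t, hxt⟩ := ht.exists_lift x.top (congrArg ExtHom.top hx)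
  obtain ⟨d, hxd⟩ := hb.exists_lift x.bot (congrArg ExtHom.bot hx)
  exact ⟨⟨t, d, by rw [← cancel_mono k.bot, Category.assoc, ← k.w, reassoc_of% hxt, x.w,
    Category.assoc, hxd]⟩, ExtHom.ext hxt hxd⟩

variable [HasKernels 𝒞]

/-- The morphism induced by a morphism of extensions on the kernels of these extensions. -/
noncomputable def kernelMap (φ : a ⟶ b) : kernel a.hom ⟶ kernel b.hom :=
  kernel.map a.hom b.hom φ.top φ.bot φ.w.symm

lemma kernelMap_ι (φ : a ⟶ b) : kernelMap φ ≫ kernel.ι b.hom = kernel.ι a.hom ≫ φ.top :=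
  kernel.lift_ι ..

lemma kernelMap_comp_of_section {p : a ⟶ b} {s : b ⟶ a} (hs : s ≫ p = 𝟙 b) :
    kernelMap s ≫ kernelMap p = 𝟙 (kernel b.hom) := by
  rw [← cancel_mono (kernel.ι b.hom), Category.assoc, kernelMap_ι, reassoc_of% kernelMap_ι s,
    ← comp_top, hs, id_top, Category.comp_id, Category.id_comp]

lemma isKernel_kernelMap {k : c ⟶ a} {p : a ⟶ b} (ht : IsKernel k.top p.top) [Mono k.bot] :
    IsKernel (kernelMap k) (kernelMap p) :=
  .of_grid ht (.kernel_ι c.hom) (kernel.condition a.hom) (kernelMap_ι k) (kernelMap_ι p) k.w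

end ExtHom

end Extensions

section SplitExtensions

variable {𝒞 : Type u} [Category.{v} 𝒞] [HasZeroMorphisms 𝒞] [HasFiniteLimits 𝒞]
  {E : MorphismProperty 𝒞} [E.IsStableUnderBaseChange] [E.IsMultiplicative] {a b c : ExtObj E}

lemma AxE5.mem_of_isKernel_top_bot (h5 : AxE5 E) (h4 : AxE4 E) {p : a ⟶ b} {s : b ⟶ a}
    (hs : s ≫ p = 𝟙 b) {K₁ K₀ : 𝒞} {k₁ : K₁ ⟶ a.dom} {k₀ : K₀ ⟶ a.cod} {h : K₁ ⟶ K₀}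
    (hk₁ : IsKernel k₁ p.top) (hk₀ : IsKernel k₀ p.bot) (hh : h ≫ k₀ = k₁ ≫ a.hom) : E h := by
  have hP := IsPullback.of_hasPullback b.hom p.bot
  let l := hP.lift p.top a.hom p.w
  have hlfst : l ≫ pullback.fst _ _ = p.top := hP.lift_fst ..
  have hlsnd : l ≫ pullback.snd _ _ = a.hom := hP.lift_snd ..
  have hkb : IsKernel (hP.lift (kernel.ι b.hom) 0 (by simp)) (pullback.snd b.hom p.bot) :=
    (IsKernel.kernel_ι b.hom).lift_of_isPullback hP (hP.lift_fst ..) (hP.lift_snd ..)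
  have hka := IsKernel.kernel_ι a.hom
  have hl : E l := h5 _ _ a.hom _ l (ExtHom.kernelMap p) hlsnd
    (hP.hom_ext (by simp [hlfst, ExtHom.kernelMap_ι]) (by simp [hlsnd])) hka.1 hkb.1 hka.2 hkb.2
    a.mem (h4.of_section (ExtHom.kernelMap_comp_of_section hs))
  have hn : IsKernel (hP.lift 0 k₀ (by rw [zero_comp, hk₀.comp_eq_zero])) (pullback.fst _ _) :=
    hk₀.lift_of_isPullback hP.flip (hP.lift_snd ..) (hP.lift_fst ..)
  refine E.of_isPullback (IsKernel.isPullback (hlfst ▸ hk₁) hn ?_) hl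
  exact hP.hom_ext (by simp [hlfst, hk₁.comp_eq_zero]) (by simp [hlsnd, hh])

lemma AxE5.isKernel_top_bot (h5 : AxE5 E) (h4 : AxE4 E) {k : c ⟶ a} {p : a ⟶ b} {s : b ⟶ a}
    (hs : s ≫ p = 𝟙 b) (hk : IsKernel k p) : IsKernel k.top p.top ∧ IsKernel k.bot p.bot := by
  have ht := IsKernel.kernel_ι p.top
  have hb := IsKernel.kernel_ι p.bot
  have hh : kernel.map p.top p.bot a.hom b.hom p.w ≫ kernel.ι p.bot = kernel.ι p.top ≫ a.hom :=
    kernel.lift_ι ..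
  let κ : ExtObj.mk _ _ _ (h5.mem_of_isKernel_top_bot h4 hs ht hb hh) ⟶ a := ⟨_, _, hh.symm⟩
  have hκ : IsKernel κ p := ExtHom.isKernel_of_top_bot ht hb
  obtain ⟨u, rfl⟩ := hκ.exists_lift k hk.comp_eq_zero
  have := hk.isIso hκ rfl
  have := ExtHom.isIso_top u
  have := ExtHom.isIso_bot u
  exact ⟨ht.iso_comp u.top, hb.iso_comp u.bot⟩

lemma AxM.isKernel_top_of_isKernel_fibre (hM : AxM E) (hsf : SplitShortFive 𝒞) (h4 : AxE4 E)
    (h5 : AxE5 E) {k : c ⟶ a} {p : a ⟶ b} {s : b ⟶ a} (hs : s ≫ p = 𝟙 b) (hkp : k ≫ p = 0)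
    (hbot : IsKernel k.bot p.bot) {Kc Ka Kb : 𝒞} {κ : Kc ⟶ Ka} {π : Ka ⟶ Kb} {jc : Kc ⟶ c.dom}
    {ja : Ka ⟶ a.dom} {jb : Kb ⟶ b.dom} (hκ : IsKernel κ π) (hc : IsKernel jc c.hom)
    (ha : IsKernel ja a.hom) (hb : IsKernel jb b.hom) (hκk : κ ≫ ja = jc ≫ k.top)
    (hπp : π ≫ jb = ja ≫ p.top) : IsKernel k.top p.top := by
  have := hbot.mono
  have := hb.mono
  have ht := IsKernel.kernel_ι p.top
  obtain ⟨h, hh⟩ := hbot.exists_lift (kernel.ι p.top ≫ a.hom) (by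
    rw [Category.assoc, ← p.w, reassoc_of% ht.comp_eq_zero, zero_comp])
  obtain ⟨l, hl⟩ := ht.exists_lift k.top (congrArg ExtHom.top hkp)
  have hlh : l ≫ h = c.hom := by
    rw [← cancel_mono k.bot, Category.assoc, hh, reassoc_of% hl, k.w]
  have hcl : IsKernel (jc ≫ l) h :=
    .of_grid ha hκ ht.comp_eq_zero (by rw [Category.assoc, hl, hκk]) hh hπp.symm
  have := hM.isIso_of_isKernel hsf c.mem (h5.mem_of_isKernel_top_bot h4 hs ht hbot hh) hlh hc hcl
  rw [← hl]
  exact ht.iso_comp l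

end SplitExtensions

namespace Normalization

section

variable {𝒞 : Type u} [Category.{v} 𝒞] {E N : MorphismProperty 𝒞} (ND : Normalization E N)
  {a b c : ExtObj E}

lemma naturality (φ : a ⟶ b) : ND.η₁.app a ≫ ND.I₁.map φ = φ ≫ ND.η₁.app b :=
  (ND.η₁.naturality φ).symm

lemma naturality_top (φ : a ⟶ b) :
    (ND.η₁.app a).top ≫ (ND.I₁.map φ).top = φ.top ≫ (ND.η₁.app b).top :=
  congrArg ExtHom.top (ND.naturality φ)

lemma naturality_bot (φ : a ⟶ b) :
    (ND.η₁.app a).bot ≫ (ND.I₁.map φ).bot = φ.bot ≫ (ND.η₁.app b).bot :=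
  congrArg ExtHom.bot (ND.naturality φ)

lemma map_comp_fibre {φ : a ⟶ b} {Ka Kb Ja Jb : 𝒞} {κ : Ka ⟶ Kb} {ιa : Ka ⟶ a.dom}
    {ιb : Kb ⟶ b.dom} {ua : Ka ⟶ Ja} {ub : Kb ⟶ Jb} {m : Ja ⟶ Jb} {ja : Ja ⟶ (ND.I₁.obj a).dom}
    {jb : Jb ⟶ (ND.I₁.obj b).dom} [Epi ua] (hm : ua ≫ m = κ ≫ ub)
    (ha : ua ≫ ja = ιa ≫ (ND.η₁.app a).top) (hb : ub ≫ jb = ιb ≫ (ND.η₁.app b).top)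
    (hκ : κ ≫ ιb = ιa ≫ φ.top) : m ≫ jb = ja ≫ (ND.I₁.map φ).top := by
  rw [← cancel_epi ua, reassoc_of% hm, hb, reassoc_of% ha, naturality_top, reassoc_of% hκ]

lemma map_comp_of_section {p : a ⟶ b} {s : b ⟶ a} (hs : s ≫ p = 𝟙 b) :
    ND.I₁.map s ≫ ND.I₁.map p = 𝟙 (ND.I₁.obj b) := by
  rw [← ND.I₁.map_comp, hs, ND.I₁.map_id]

lemma hom_ext (hb : N b.hom) {x y : ND.I₁.obj a ⟶ b}
    (hxy : ND.η₁.app a ≫ x = ND.η₁.app a ≫ y) : x = y :=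
  (ND.refl_univ a b hb (ND.η₁.app a ≫ y)).unique hxy rfl

lemma isIso_of_epi {φ : a ⟶ b} [Epi φ] (hb : N b.hom) {m : b ⟶ ND.I₁.obj a}
    (hm : φ ≫ m = ND.η₁.app a) : IsIso m := by
  obtain ⟨ψ, hψ, -⟩ := ND.refl_univ a b hb φ
  refine ⟨ψ, ?_, ND.hom_ext (ND.mem a) ?_⟩
  · rw [← cancel_epi φ, reassoc_of% hm]
    exact hψ.trans (Category.comp_id φ).symm
  · rw [reassoc_of% hψ]
    exact hm.trans (Category.comp_id _).symm

variable [HasZeroMorphisms 𝒞]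

lemma map_zero (a b : ExtObj E) : ND.I₁.map (0 : a ⟶ b) = 0 :=
  ND.hom_ext (ND.mem b) ((ND.naturality 0).trans (zero_comp.trans comp_zero.symm))

lemma isKernel_map_bot {k : c ⟶ a} {p : a ⟶ b} (hk : IsKernel k.bot p.bot) :
    IsKernel (ND.I₁.map k).bot (ND.I₁.map p).bot := by
  have := ND.bot_iso
  have hka : IsKernel (k.bot ≫ (ND.η₁.app a).bot) (ND.I₁.map p).bot :=
    hk.of_isPullback (.of_horiz_isIso ⟨ND.naturality_bot p⟩)
  rw [← ND.naturality_bot k] at hka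
  simpa using hka.iso_comp (inv (ND.η₁.app c).bot)

variable [HasKernels 𝒞]

lemma rad1map_ι (φ : a ⟶ b) :
    rad1map ND φ ≫ kernel.ι (ND.η₁.app b).top = kernel.ι (ND.η₁.app a).top ≫ φ.top :=
  kernel.lift_ι ..

lemma rad1map_comp_of_section {p : a ⟶ b} {s : b ⟶ a} (hs : s ≫ p = 𝟙 b) :
    rad1map ND s ≫ rad1map ND p = 𝟙 (kernel (ND.η₁.app b).top) := by
  rw [← cancel_mono (kernel.ι (ND.η₁.app b).top), Category.assoc, rad1map_ι,
    reassoc_of% ND.rad1map_ι s]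
  exact (congrArg (kernel.ι (ND.η₁.app b).top ≫ ·) (congrArg ExtHom.top hs)).trans
    ((Category.comp_id _).trans (Category.id_comp _).symm)

lemma isKernel_rad1map {k : c ⟶ a} {p : a ⟶ b} (hk : IsKernel k.top p.top)
    [Mono (ND.I₁.map k).top] : IsKernel (rad1map ND k) (rad1map ND p) :=
  .of_grid hk (.kernel_ι _) (kernel.condition _) (ND.rad1map_ι k) (ND.rad1map_ι p)
    (ND.naturality_top k).symm

end

variable {𝒞 : Type u} [Category.{v} 𝒞] [HasZeroMorphisms 𝒞] [HasFiniteLimits 𝒞]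
  {G : GaloisStructure 𝒞} {S : SecondStructure G}
  (ND : Normalization G.E (fun _ _ f => S.NormalComp f))

lemma exists_isKernel_of_normal (hs : SplitShortFive 𝒞) (h4 : AxE4 G.E) (h5 : AxE5 G.E)
    (hM : AxM G.E) (htype1 : PreservesType1 G.E G.I) (hproto : ProtoadditiveOn G.inX S.Fr)
    {f : ExtObj G.E} (hf : G.Normal f.hom) {K : 𝒞} {ι : K ⟶ f.dom} (hι : IsKernel ι f.hom) :
    ∃ j : S.reflector.obj K ⟶ (ND.I₁.obj f).dom,
      IsKernel j (ND.I₁.obj f).hom ∧ S.unit K ≫ j = ι ≫ (ND.η₁.app f).top := by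
  obtain ⟨Q, q, q', j, hq, hq', hqf, hj, hιj⟩ :=
    S.exists_normalComp_quotient hs h4 h5 hM htype1 hproto hf hι
  have hηw : (ND.η₁.app f).top ≫ (ND.I₁.obj f).hom = (q' ≫ q) ≫ (ND.η₁.app f).bot :=
    hqf ▸ (ND.η₁.app f).w
  obtain ⟨m, hm⟩ :=
    S.exists_desc_of_normalComp h4 hM hs hq' (hqf ▸ hι) hj.mono hιj (ND.mem f) hηw
  have : Epi q' := hM.epi h4 hq'
  let φ : f ⟶ ⟨Q, f.cod, q, hq.1⟩ := ⟨q', 𝟙 f.cod, by rw [hqf, Category.comp_id]⟩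
  have : Epi φ.top := this
  have : Epi φ.bot := inferInstanceAs (Epi (𝟙 f.cod))
  have := ExtHom.epi φ
  let μ : (⟨Q, f.cod, q, hq.1⟩ : ExtObj G.E) ⟶ ND.I₁.obj f :=
    ⟨m, (ND.η₁.app f).bot, by rw [← cancel_epi q', reassoc_of% hm, hηw, Category.assoc]⟩
  have := ND.isIso_of_epi hq (φ := φ) (m := μ) (ExtHom.ext hm (Category.id_comp _))
  have := ExtHom.isIso_top μ
  have := ExtHom.isIso_bot μ
  refine ⟨j ≫ μ.top, hj.of_isPullback (.of_horiz_isIso ⟨μ.w⟩), ?_⟩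
  rw [reassoc_of% hιj, ← hm]

lemma isKernel_unit_top_of_normal (hs : SplitShortFive 𝒞) (h4 : AxE4 G.E) (h5 : AxE5 G.E)
    (hM : AxM G.E) (htype1 : PreservesType1 G.E G.I) (hproto : ProtoadditiveOn G.inX S.Fr)
    {f : ExtObj G.E} (hf : G.Normal f.hom) :
    IsKernel (kernel.ι (S.unit (kernel f.hom)) ≫ kernel.ι f.hom) (ND.η₁.app f).top := by
  have hι := IsKernel.kernel_ι f.hom
  obtain ⟨j, hj, hιj⟩ := ND.exists_isKernel_of_normal hs h4 h5 hM htype1 hproto hf hι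
  have := ND.bot_iso f
  have hη : IsKernel (kernel.ι f.hom) ((ND.η₁.app f).top ≫ (ND.I₁.obj f).hom) :=
    (ND.η₁.app f).w ▸ hι.comp_mono (ND.η₁.app f).bot
  exact (IsKernel.kernel_ι _).of_isPullback (hη.isPullback hj hιj)

lemma isKernel_map_top_of_normal (hsf : SplitShortFive 𝒞) (h4 : AxE4 G.E) (h5 : AxE5 G.E)
    (hM : AxM G.E) (htype1 : PreservesType1 G.E G.I) (hproto : ProtoadditiveOn G.inX S.Fr)
    {a b c : ExtObj G.E} {k : c ⟶ a} {p : a ⟶ b} {s : b ⟶ a} (hc : G.Normal c.hom)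
    (ha : G.Normal a.hom) (hb : G.Normal b.hom) (hs : s ≫ p = 𝟙 b) (hk : IsKernel k p) :
    IsKernel (ND.I₁.map k).top (ND.I₁.map p).top := by
  obtain ⟨htop, hbot⟩ := h5.isKernel_top_bot h4 hs hk
  have := hbot.mono
  have key {f : ExtObj G.E} (hf : G.Normal f.hom) :=
    ND.exists_isKernel_of_normal hsf h4 h5 hM htype1 hproto hf (.kernel_ι f.hom)
  obtain ⟨jc, hjc, hιjc⟩ := key hc
  obtain ⟨ja, hja, hιja⟩ := key ha
  obtain ⟨jb, hjb, hιjb⟩ := key hb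
  have hJ : IsKernel (S.reflector.map (ExtHom.kernelMap k))
      (S.reflector.map (ExtHom.kernelMap p)) :=
    S.isKernel_reflector_map hproto (ExtHom.kernelMap_comp_of_section hs)
      (ExtHom.isKernel_kernelMap htop)
      (G.trivial_of_inX (G.inX_of_isKernel_of_normal ha (.kernel_ι _))
        (G.inX_of_isKernel_of_normal hb (.kernel_ι _)) _)
  have hepi (x : ExtObj G.E) : Epi (S.unit (kernel x.hom)) := hM.epi h4 (S.unit_mem _)
  exact hM.isKernel_top_of_isKernel_fibre hsf h4 h5 (ND.map_comp_of_section hs)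
    (by rw [← ND.I₁.map_comp, hk.comp_eq_zero, ND.map_zero]) (ND.isKernel_map_bot hbot) hJ hjc hja
    hjb (ND.map_comp_fibre (S.unit_naturality _) hιjc hιja (ExtHom.kernelMap_ι k))
    (ND.map_comp_fibre (S.unit_naturality _) hιja hιjb (ExtHom.kernelMap_ι p))

end Normalization

/-- in a composite of closed Galois structures as in the paper, for a
`Γ`-normal extension `f`, the radical `[f]_{Γ'',1}` (kernel of the domain component of
the unit of the normalisation of `Ext_ℰ(𝒞)` onto `NExt_{Γ''}(𝒞)` at `f`) coincides, as a
subobject of the domain of `f`, with `[Ker f]_{Γ'',0}` (the kernel of the unit of the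
composite reflection at `Ker f`).  Consequently `[−]_{Γ'',1}` restricted to `NExt_Γ(𝒞)`
is protoadditive, and hence so is the reflector `F₁` of `NExt_Γ(𝒞)` onto
`NExt_{Γ''}(𝒞)` (the restriction of `I₁''`). -/
theorem radical_of_normal_extension
    {𝒞 : Type u} [Category.{v} 𝒞] [HasZeroMorphisms 𝒞] [HasZeroObject 𝒞]
    [HasFiniteLimits 𝒞]
    (G : GaloisStructure 𝒞) (S : SecondStructure G)
    (hpm : ProtomodularCat 𝒞)
    (h4 : AxE4 G.E) (h5 : AxE5 G.E) (hM : AxM G.E)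
    (htype1 : PreservesType1 G.E G.I)
    (hproto : ProtoadditiveOn G.inX S.Fr)
    (ND : Normalization G.E (fun _ _ f => S.NormalComp f))
    (f : ExtObj G.E) (hf : G.Normal f.hom) :
    (∃ e : kernel ((ND.η₁.app f).top) ≅ kernel (S.unit (kernel f.hom)),
      e.hom ≫ (kernel.ι (S.unit (kernel f.hom)) ≫ kernel.ι f.hom) =
        kernel.ι ((ND.η₁.app f).top)) ∧
    (∀ {k' a' b' : ExtObj G.E} (k : k' ⟶ a') (p : a' ⟶ b') (s : b' ⟶ a'),
      G.Normal k'.hom → G.Normal a'.hom → G.Normal b'.hom →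
      s ≫ p = 𝟙 b' → ∀ (hk : k ≫ p = 0),
      Nonempty (IsLimit (KernelFork.ofι k hk)) →
      ((∃ h0 : rad1map ND k ≫ rad1map ND p = 0,
          Nonempty (IsLimit (KernelFork.ofι (rad1map ND k) h0)) ∧
          ∃ σ : kernel ((ND.η₁.app b').top) ⟶ kernel ((ND.η₁.app a').top),
            σ ≫ rad1map ND p = 𝟙 _) ∧
        (∃ h1 : ND.I₁.map k ≫ ND.I₁.map p = 0,
          Nonempty (IsLimit (KernelFork.ofι (ND.I₁.map k) h1)) ∧
          ∃ τ : ND.I₁.obj b' ⟶ ND.I₁.obj a',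
            τ ≫ ND.I₁.map p = 𝟙 _))) := by
  have hs5 : SplitShortFive 𝒞 := hpm.2
  have hker := ND.isKernel_unit_top_of_normal hs5 h4 h5 hM htype1 hproto hf
  obtain ⟨e, he⟩ := hker.exists_lift _ (kernel.condition (ND.η₁.app f).top)
  have := (IsKernel.kernel_ι _).isIso hker he
  refine ⟨⟨asIso e, he⟩, fun k p s hnk hna hnb hs hk hlim => ?_⟩
  obtain ⟨htop, hbot⟩ := h5.isKernel_top_bot h4 hs ⟨hk, hlim⟩
  have hI₁top := ND.isKernel_map_top_of_normal hs5 h4 h5 hM htype1 hproto hnk hna hnb hs ⟨hk, hlim⟩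
  have := hI₁top.mono
  have hrad := ND.isKernel_rad1map htop
  have hI₁ := ExtHom.isKernel_of_top_bot hI₁top (ND.isKernel_map_bot hbot)
  exact ⟨⟨hrad.1, hrad.2, rad1map ND s, ND.rad1map_comp_of_section hs⟩,
    ⟨hI₁.1, hI₁.2, ND.I₁.map s, ND.map_comp_of_section hs⟩⟩
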